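/- arXiv:1509.04900 — 4 statements merged into one kernel-verified Lean document; each statement's English description precedes it below -/
import Mathlib

section
/- For every integer k ≥ 0, the Hausdorff dimension of U_{2^k} equals the Hausdorff dimension of U_1, and this common value is log(2 + √2)/(−log λ). -/
open Filter Topology

/-- `codingApprox f i n = f (i 0) (f (i 1) (⋯ (f (i (n-1)) 0)))`, i.e. the `n`-th
approximation `f_{i_1} ∘ ⋯ ∘ f_{i_n} (0)` of the point coded by `i`. -/
noncomputable def codingApprox (f : Fin 4 → ℝ → ℝ) : (ℕ → Fin 4) → ℕ → ℝ
  | _, 0 => 0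
  | i, n + 1 => f (i 0) (codingApprox f (fun k => i (k + 1)) n)

/-- The set of codings of `x` for the IFS `f`. -/
def codings (f : Fin 4 → ℝ → ℝ) (x : ℝ) : Set (ℕ → Fin 4) :=
  {i | Tendsto (codingApprox f i) atTop (𝓝 x)}

/-!
The only overlap of the system is the exact one `f₂ ∘ f₄ = f₃ ∘ f₁`: a coding whose first two
letters are not `24` or `31` has a point at a definite distance from every point whose first
letter is different. Exchanging `24` and `31` preserves the coded point, so the points with a
unique coding are those coded by sequences avoiding both words, and a point with finitely many
codings has a coding avoiding them from some place on; hence `U_m` is covered by countably many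
similar copies of `U_1`. Conversely `f₂ ∘ f₄` maps a point with `m` codings to one with `2 m`
codings.

The transition matrix of the sequences avoiding `24` and `31` has Perron eigenvalue
`t = 2 + √2`, and the eigenvector bounds the number of cylinders of level `n` by `C t ^ n`,
which gives the upper bound on `dim_H U_1`. For the lower bound, the eigenvector is read as a
family of interval lengths carrying a piecewise linear Markov map of slope `t`; the point coded
by the itinerary of `v` depends on `v` with a Hölder continuous inverse of exponent
`log t / (-log λ)`.
-/

open scoped NNReal

section HausdorffDimension

lemma rpow_log_div_neg_log {r t : ℝ} (hr₀ : 0 < r) (hr₁ : r < 1) (ht : 0 < t) :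
    r ^ (Real.log t / -Real.log r) = t⁻¹ := by
  rw [div_neg, Real.rpow_neg hr₀.le, Real.log_div_log, Real.rpow_logb hr₀ hr₁.ne ht]

lemma dimH_univ_le_of_edist_le_rpow {X Y : Type*} [EMetricSpace X] [EMetricSpace Y]
    {f : X → Y} {C s : ℝ≥0} (hs : 0 < s)
    (hf : ∀ x y, edist x y ≤ C * edist (f x) (f y) ^ (s : ℝ)) :
    dimH (Set.univ : Set X) ≤ dimH (Set.range f) / s := by
  cases isEmpty_or_nonempty X
  · simp only [Set.eq_empty_of_isEmpty, dimH_empty, zero_le]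
  have f_injective : f.Injective := fun x y hxy => by
    have hfxy := hf x y
    rw [hxy, edist_self, ENNReal.zero_rpow_of_pos (NNReal.coe_pos.2 hs), mul_zero] at hfxy
    exact edist_le_zero.1 hfxy
  have left_inverse : Function.LeftInverse f.invFun f := Function.leftInverse_invFun f_injective
  have inv_holder : HolderOnWith C s f.invFun (Set.range f) := by
    rintro _ ⟨x, rfl⟩ _ ⟨y, rfl⟩
    rw [left_inverse x, left_inverse y]
    exact hf x y
  have inv_image : f.invFun '' Set.range f = Set.univ := by
    rw [← Set.range_comp, left_inverse.comp_eq_id, Set.range_id]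
  exact inv_image ▸ inv_holder.dimH_image_le hs

lemma dimH_le_of_card_mul_rpow_le {X : Type*} [MetricSpace X] {A : Set X} {s C : ℝ} (hs : 0 ≤ s)
    {ρ : ℕ → ℝ} (hρ₀ : ∀ n, 0 ≤ ρ n) (hρ : Tendsto ρ atTop (𝓝 0)) (E : ℕ → Finset X)
    (hcard : ∀ n, (E n).card * (2 * ρ n) ^ s ≤ C)
    (hcover : ∀ n, ∀ x ∈ A, ∃ y ∈ E n, dist x y ≤ ρ n) :
    dimH A ≤ ENNReal.ofReal s := by
  borelize X
  let ball (n : ℕ) (y : E n) : Set X := Metric.closedEBall (y : X) (ENNReal.ofReal (ρ n))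
  have ediam_ball (n : ℕ) (y : E n) : Metric.ediam (ball n y) ≤ ENNReal.ofReal (2 * ρ n) := by
    rw [ENNReal.ofReal_mul zero_le_two, ENNReal.ofReal_ofNat]
    exact Metric.ediam_closedEBall_le
  have diam_tendsto : Tendsto (fun n => ENNReal.ofReal (2 * ρ n)) atTop (𝓝 0) := by
    simpa using ENNReal.tendsto_ofReal (hρ.const_mul 2)
  have subset_iUnion (n : ℕ) : A ⊆ ⋃ y, ball n y := fun x hx => by
    obtain ⟨y, hy, hxy⟩ := hcover n x hx
    exact Set.mem_iUnion.2 ⟨⟨y, hy⟩, by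
      simpa only [ball, Metric.mem_closedEBall, edist_dist] using ENNReal.ofReal_le_ofReal hxy⟩
  have sum_le (n : ℕ) : ∑ y, Metric.ediam (ball n y) ^ s ≤ ENNReal.ofReal C := by
    calc ∑ y, Metric.ediam (ball n y) ^ s
        ≤ ∑ _y : E n, ENNReal.ofReal (2 * ρ n) ^ s :=
          Finset.sum_le_sum fun y _ => ENNReal.rpow_le_rpow (ediam_ball n y) hs
      _ = ENNReal.ofReal ((E n).card * (2 * ρ n) ^ s) := by
          rw [ENNReal.ofReal_rpow_of_nonneg (mul_nonneg zero_le_two (hρ₀ n)) hs, Finset.sum_const,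
            Finset.card_univ, Fintype.card_coe, ENNReal.ofReal_mul (Nat.cast_nonneg _),
            ENNReal.ofReal_natCast, nsmul_eq_mul]
      _ ≤ ENNReal.ofReal C := ENNReal.ofReal_le_ofReal (hcard n)
  refine dimH_le_of_hausdorffMeasure_ne_top (d := s.toNNReal) ?_
  rw [Real.coe_toNNReal s hs]
  exact ne_top_of_le_ne_top ENNReal.ofReal_ne_top
    ((MeasureTheory.Measure.hausdorffMeasure_le_liminf_sum s A _ diam_tendsto ball
      (.of_forall ediam_ball) (.of_forall subset_iUnion)).trans
      ((liminf_le_liminf (.of_forall sum_le)).trans_eq (liminf_const _)))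

lemma dimH_le_of_geometric_cover {X : Type*} [MetricSpace X] {A : Set X} {r s t M C : ℝ}
    (hr₀ : 0 < r) (hr₁ : r < 1) (hs : 0 ≤ s) (hrs : r ^ s = t⁻¹) (hM : 0 ≤ M)
    (E : ℕ → Finset X) (hcard : ∀ n, ((E n).card : ℝ) ≤ C * t ^ n)
    (hcover : ∀ n, ∀ x ∈ A, ∃ y ∈ E n, dist x y ≤ M * r ^ n) :
    dimH A ≤ ENNReal.ofReal s := by
  have ht : 0 < t := inv_pos.1 (hrs ▸ Real.rpow_pos_of_pos hr₀ s)
  have radius_tendsto : Tendsto (fun n => M * r ^ n) atTop (𝓝 0) := by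
    simpa using (tendsto_pow_atTop_nhds_zero_of_lt_one hr₀.le hr₁).const_mul M
  have diam_rpow (n : ℕ) : (2 * (M * r ^ n)) ^ s = (2 * M) ^ s * (t ^ n)⁻¹ := by
    rw [← mul_assoc, Real.mul_rpow (by positivity) (by positivity),
      ← Real.rpow_pow_comm hr₀.le, hrs, inv_pow]
  refine dimH_le_of_card_mul_rpow_le (C := C * (2 * M) ^ s) hs (fun n => by positivity)
    radius_tendsto E (fun n => ?_) hcover
  calc (E n).card * (2 * (M * r ^ n)) ^ s
      ≤ C * t ^ n * ((2 * M) ^ s * (t ^ n)⁻¹) := by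
        rw [diam_rpow]
        exact mul_le_mul_of_nonneg_right (hcard n) (by positivity)
    _ = C * (2 * M) ^ s := by field_simp

end HausdorffDimension

section CodedPoints

/-- The sequence `i` with its first `n` terms removed, i.e. the `n`-fold left shift. -/
def dropSeq {ι : Type*} (n : ℕ) (i : ℕ → ι) : ℕ → ι := fun k => i (k + n)

/-- The sequence `b, i 0, i 1, …`. -/
def consSeq {ι : Type*} (b : ι) (i : ℕ → ι) : ℕ → ι
  | 0 => b
  | n + 1 => i n

/-- The point with digit sequence `i` for the homogeneous self-similar system
`x ↦ r * x + d b`. It is the limit of the points `codingApprox`. -/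
noncomputable def codedPoint {ι : Type*} (r : ℝ) (d : ι → ℝ) (i : ℕ → ι) : ℝ :=
  ∑' k, r ^ k * d (i k)

variable {ι : Type*} {r : ℝ} {d : ι → ℝ}

lemma consSeq_injective (b : ι) : Function.Injective (consSeq b) :=
  fun _ _ h => funext fun n => congrFun h (n + 1)

lemma consSeq_consSeq_dropSeq_two (i : ℕ → ι) :
    consSeq (i 0) (consSeq (i 1) (dropSeq 2 i)) = i := by
  funext n
  match n with
  | 0 | 1 | _ + 2 => rfl

lemma summable_pow_mul_digit [Finite ι] (hr : |r| < 1) (i : ℕ → ι) :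
    Summable fun k => r ^ k * d (i k) := by
  obtain ⟨D, hD⟩ := (Set.finite_range fun b => ‖d b‖).bddAbove
  refine .of_norm_bounded ((summable_geometric_of_lt_one (abs_nonneg r) hr).mul_right D) fun k => ?_
  rw [norm_mul, norm_pow, Real.norm_eq_abs r]
  exact mul_le_mul_of_nonneg_left (hD ⟨i k, rfl⟩) (by positivity)

lemma codedPoint_eq_sum_add [Finite ι] (hr : |r| < 1) (n : ℕ) (i : ℕ → ι) :
    codedPoint r d i =
      ∑ k ∈ Finset.range n, r ^ k * d (i k) + r ^ n * codedPoint r d (dropSeq n i) := by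
  rw [codedPoint, codedPoint, ← (summable_pow_mul_digit hr i).sum_add_tsum_nat_add n,
    ← tsum_mul_left]
  simp only [dropSeq, pow_add, mul_comm, mul_left_comm]

lemma codedPoint_eq_add_mul [Finite ι] (hr : |r| < 1) (i : ℕ → ι) :
    codedPoint r d i = d (i 0) + r * codedPoint r d (dropSeq 1 i) := by
  simpa using codedPoint_eq_sum_add hr 1 i

lemma codedPoint_sub_eq_pow_mul [Finite ι] (hr : |r| < 1) {n : ℕ} {i j : ℕ → ι}
    (hij : ∀ k < n, i k = j k) :
    codedPoint r d i - codedPoint r d j =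
      r ^ n * (codedPoint r d (dropSeq n i) - codedPoint r d (dropSeq n j)) := by
  have head_sums_eq :
      ∑ k ∈ Finset.range n, r ^ k * d (i k) = ∑ k ∈ Finset.range n, r ^ k * d (j k) :=
    Finset.sum_congr rfl fun k hk => by rw [hij k (Finset.mem_range.1 hk)]
  rw [codedPoint_eq_sum_add hr n i, codedPoint_eq_sum_add hr n j, head_sums_eq]
  ring

lemma codedPoint_mem_Icc [Finite ι] (hr₀ : 0 ≤ r) (hr₁ : r < 1) {A B : ℝ}
    (hd : ∀ b, d b ∈ Set.Icc A B) (i : ℕ → ι) :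
    codedPoint r d i ∈ Set.Icc (A / (1 - r)) (B / (1 - r)) := by
  have hsum := (summable_pow_mul_digit (d := d) (abs_lt.2 ⟨by linarith, hr₁⟩) i).hasSum
  have hgeom (c : ℝ) : HasSum (fun k => r ^ k * c) (c / (1 - r)) := by
    rw [div_eq_inv_mul]
    exact (hasSum_geometric_of_lt_one hr₀ hr₁).mul_right c
  have hpow (k : ℕ) : 0 ≤ r ^ k := pow_nonneg hr₀ k
  exact ⟨hasSum_le (fun k => mul_le_mul_of_nonneg_left (hd (i k)).1 (hpow k)) (hgeom A) hsum,
    hasSum_le (fun k => mul_le_mul_of_nonneg_left (hd (i k)).2 (hpow k)) hsum (hgeom B)⟩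

lemma exists_abs_codedPoint_le [Finite ι] (hr₀ : 0 ≤ r) (hr₁ : r < 1) (d : ι → ℝ) :
    ∃ M, 0 ≤ M ∧ ∀ i : ℕ → ι, |codedPoint r d i| ≤ M := by
  obtain ⟨D, hD⟩ := (Set.finite_range fun b => |d b|).bddAbove
  refine ⟨|D| / (1 - r), div_nonneg (abs_nonneg D) (by linarith), fun i => abs_le.2 ?_⟩
  rw [← neg_div]
  exact codedPoint_mem_Icc hr₀ hr₁
    (fun b => abs_le.1 ((hD ⟨b, rfl⟩).trans (le_abs_self D))) i

lemma codedPoint_mem_of_isClosed [Finite ι] (hr : |r| < 1) {K : Set ℝ} (hne : K.Nonempty)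
    (hclosed : IsClosed K) (hmaps : ∀ b, Set.MapsTo (fun x => r * x + d b) K K) (i : ℕ → ι) :
    codedPoint r d i ∈ K := by
  obtain ⟨y, hy⟩ := hne
  have approx_mem (n : ℕ) :
      ∀ i : ℕ → ι, ∑ k ∈ Finset.range n, r ^ k * d (i k) + r ^ n * y ∈ K := by
    induction n with
    | zero => exact fun _ => by simpa using hy
    | succ n ih =>
      intro i
      convert hmaps (i 0) (ih (dropSeq 1 i)) using 1
      simp only [Finset.sum_range_succ', mul_add, Finset.mul_sum, dropSeq, pow_succ', pow_zero,
        one_mul, mul_assoc]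
      ring
  have approx_tendsto : Tendsto (fun n => ∑ k ∈ Finset.range n, r ^ k * d (i k) + r ^ n * y)
      atTop (𝓝 (codedPoint r d i)) := by
    simpa [codedPoint] using (summable_pow_mul_digit hr i).hasSum.tendsto_sum_nat.add
      ((tendsto_pow_atTop_nhds_zero_of_abs_lt_one hr).mul_const y)
  exact hclosed.mem_of_tendsto approx_tendsto (.of_forall fun n => approx_mem n i)

lemma dimH_image_codedPoint_eventually_le [Finite ι] (hr : |r| < 1) (S : Set (ℕ → ι)) :
    dimH (codedPoint r d '' {i | ∃ n, dropSeq n i ∈ S}) ≤ dimH (codedPoint r d '' S) := by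
  let extend (w : Σ n, Fin n → ι) (x : ℝ) : ℝ :=
    ∑ k : Fin w.1, r ^ (k : ℕ) * d (w.2 k) + r ^ w.1 * x
  have extend_lipschitz (w : Σ n, Fin n → ι) : LipschitzWith ‖r ^ w.1‖₊ (extend w) :=
    .of_dist_le_mul fun x y => le_of_eq <| by
      rw [Real.dist_eq, Real.dist_eq, coe_nnnorm, Real.norm_eq_abs, ← abs_mul]
      congr 1
      ring
  have subset_iUnion : codedPoint r d '' {i | ∃ n, dropSeq n i ∈ S} ⊆
      ⋃ w, extend w '' (codedPoint r d '' S) := by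
    rintro _ ⟨i, ⟨n, hn⟩, rfl⟩
    refine Set.mem_iUnion.2 ⟨⟨n, fun k => i k⟩, _, ⟨_, hn, rfl⟩, ?_⟩
    rw [codedPoint_eq_sum_add hr n i, Finset.sum_range]
  calc _ ≤ dimH (⋃ w, extend w '' (codedPoint r d '' S)) := dimH_mono subset_iUnion
    _ = ⨆ w, dimH (extend w '' (codedPoint r d '' S)) := dimH_iUnion _
    _ ≤ dimH (codedPoint r d '' S) := iSup_le fun w => (extend_lipschitz w).dimH_image_le _

end CodedPoints

section MarkovShift

/-- Membership in the topological Markov chain with transition relation `R`. -/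
def IsAdmissible {ι : Type*} (R : ι → ι → Prop) (i : ℕ → ι) : Prop := ∀ n, R (i n) (i (n + 1))

variable {ι : Type*} {R : ι → ι → Prop} {r : ℝ} {d : ι → ℝ}

lemma IsAdmissible.dropSeq {i : ℕ → ι} (hi : IsAdmissible R i) (n : ℕ) :
    IsAdmissible R (dropSeq n i) := fun k => by
  simpa only [_root_.dropSeq, Nat.add_right_comm] using hi (k + n)

lemma eq_of_codedPoint_eq [Finite ι] (hr₀ : 0 < r) (hr₁ : r < 1)
    (hsep : ∀ i j, IsAdmissible R i → i 0 ≠ j 0 → codedPoint r d i ≠ codedPoint r d j)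
    {i j : ℕ → ι} (hi : IsAdmissible R i) (hij : codedPoint r d i = codedPoint r d j) : i = j := by
  by_contra hne
  set n := PiNat.firstDiff i j
  have tails_ne := hsep (dropSeq n i) (dropSeq n j) (hi.dropSeq n) (by
    simpa only [dropSeq, zero_add] using PiNat.apply_firstDiff_ne hne)
  have hdiff := codedPoint_sub_eq_pow_mul (d := d) (abs_lt.2 ⟨by linarith, hr₁⟩)
    fun k (hk : k < n) => PiNat.apply_eq_of_lt_firstDiff hk
  rw [hij, sub_self, zero_eq_mul] at hdiff
  exact hdiff.elim (pow_pos hr₀ n).ne' (sub_ne_zero.2 tails_ne)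

lemma exists_offsets_partition (S : Finset ι) (w : ι → ℝ) :
    ∃ c : ι → ℝ, ∀ v, 0 ≤ v → v < ∑ b ∈ S, w b → ∃ b ∈ S, v - c b ∈ Set.Ico 0 (w b) := by
  classical
  induction S using Finset.induction_on with
  | empty => exact ⟨0, fun v hv₀ hv => absurd hv₀ hv.not_ge⟩
  | insert a S ha ih =>
    obtain ⟨c, hc⟩ := ih
    refine ⟨Function.update c a (∑ b ∈ S, w b), fun v hv₀ hv => ?_⟩
    rw [Finset.sum_insert ha] at hv
    rcases lt_or_ge v (∑ b ∈ S, w b) with hlt | hge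
    · obtain ⟨b, hb, hvb⟩ := hc v hv₀ hlt
      refine ⟨b, Finset.mem_insert_of_mem hb, ?_⟩
      rwa [Function.update_of_ne (ne_of_mem_of_not_mem hb ha)]
    · refine ⟨a, Finset.mem_insert_self a S, ?_⟩
      rw [Function.update_self]
      constructor <;> linarith

variable {w : ι → ℝ} {t : ℝ}

lemma pow_mul_abs_sub_le_of_itinerary_eq (ht : 0 ≤ t) {c : ι → ι → ℝ}
    {T : (Σ a, Set.Ico 0 (w a)) → Σ a, Set.Ico 0 (w a)}
    (hT : ∀ p, t * p.2 = c p.1 (T p).1 + (T p).2) {B : ℝ} (hB : ∀ a, w a ≤ B) (n : ℕ) :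
    ∀ p q : Σ a, Set.Ico 0 (w a), (∀ k ≤ n, (T^[k] p).1 = (T^[k] q).1) →
      t ^ n * |(p.2 : ℝ) - q.2| ≤ B := by
  induction n with
  | zero =>
    rintro ⟨a, u, hu₀, hu⟩ ⟨b, v, hv₀, hv⟩ -
    rw [pow_zero, one_mul]
    exact abs_sub_le_of_nonneg_of_le hu₀ (hu.le.trans (hB a)) hv₀ (hv.le.trans (hB b))
  | succ n ih =>
    intro p q hpq
    have expand : t * ((p.2 : ℝ) - q.2) = (T p).2 - (T q).2 := by
      have h₀ : p.1 = q.1 := hpq 0 (Nat.zero_le _)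
      have h₁ : (T p).1 = (T q).1 := hpq 1 (Nat.le_add_left 1 n)
      have offset_eq : c p.1 (T p).1 = c q.1 (T q).1 := by rw [h₀, h₁]
      rw [mul_sub, hT p, hT q, offset_eq, add_sub_add_left_eq_sub]
    calc t ^ (n + 1) * |(p.2 : ℝ) - q.2| = t ^ n * |((T p).2 : ℝ) - (T q).2| := by
          rw [← expand, abs_mul, abs_of_nonneg ht, pow_succ, mul_assoc]
      _ ≤ B := ih (T p) (T q) fun k hk => hpq (k + 1) (Nat.succ_le_succ hk)

lemma abs_le_mul_rpow_abs_codedPoint_sub [Finite ι] {s δ B x : ℝ} (hr₀ : 0 < r) (hr₁ : r < 1)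
    (hs : 0 < s) (hδ : 0 < δ) (hrs : r ^ s = t⁻¹)
    (hsep : ∀ i j, IsAdmissible R i → IsAdmissible R j → i 0 ≠ j 0 →
      δ ≤ |codedPoint r d i - codedPoint r d j|)
    {i j : ℕ → ι} (hi : IsAdmissible R i) (hj : IsAdmissible R j) (hij₀ : i 0 = j 0)
    (hx : ∀ n, (∀ k ≤ n, i k = j k) → t ^ n * |x| ≤ B) :
    |x| ≤ B / (r * δ) ^ s * |codedPoint r d i - codedPoint r d j| ^ s := by
  have ht : 0 < t := inv_pos.1 (hrs ▸ Real.rpow_pos_of_pos hr₀ s)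
  have le_mul_rpow (n : ℕ) (hn : ∀ k ≤ n, i k = j k) : |x| ≤ B * (r ^ n) ^ s := by
    rw [← Real.rpow_pow_comm hr₀.le, hrs, inv_pow, ← div_eq_mul_inv, le_div_iff₀' (pow_pos ht n)]
    exact hx n hn
  have hB : 0 ≤ B := (abs_nonneg x).trans (by simpa using hx 0 (by simpa using hij₀))
  rcases eq_or_ne i j with rfl | hne
  · have bound_tendsto : Tendsto (fun n => B * (r ^ n) ^ s) atTop (𝓝 (B * 0 ^ s)) :=
      ((tendsto_pow_atTop_nhds_zero_of_lt_one hr₀.le hr₁).rpow_const (.inr hs.le)).const_mul B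
    rw [Real.zero_rpow hs.ne', mul_zero] at bound_tendsto
    exact (ge_of_tendsto' bound_tendsto fun n => le_mul_rpow n fun _ _ => rfl).trans
      (by positivity)
  obtain ⟨n, hn⟩ : ∃ n, PiNat.firstDiff i j = n + 1 := Nat.exists_eq_succ_of_ne_zero fun h₀ =>
    PiNat.apply_firstDiff_ne hne (h₀ ▸ hij₀)
  have agree (k : ℕ) (hk : k < n + 1) : i k = j k := PiNat.apply_eq_of_lt_firstDiff (hn ▸ hk)
  have tails_sep := hsep (dropSeq (n + 1) i) (dropSeq (n + 1) j) (hi.dropSeq _) (hj.dropSeq _) <| by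
    simpa only [dropSeq, zero_add, hn] using PiNat.apply_firstDiff_ne hne
  calc |x| ≤ B * (r ^ n) ^ s := le_mul_rpow n fun k hk => agree k (Nat.lt_succ_of_le hk)
    _ = B / (r * δ) ^ s * (r ^ (n + 1) * δ) ^ s := by
        rw [pow_succ, mul_assoc, Real.mul_rpow (x := r ^ n) (by positivity) (by positivity)]
        field_simp
    _ ≤ B / (r * δ) ^ s * |codedPoint r d i - codedPoint r d j| ^ s := by
        rw [codedPoint_sub_eq_pow_mul (abs_lt.2 ⟨by linarith, hr₁⟩) agree, abs_mul,
          abs_of_pos (pow_pos hr₀ _)]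
        gcongr

variable [Fintype ι] [DecidableRel R]

/-- `T` is a piecewise linear Markov map of slope `t` on the disjoint union of the intervals
`[0, w a)`: the translates by `c a b` of the intervals `[0, w b)` with `R a b` cover `[0, t * w a)`,
the rescaled interval `[0, w a)`. -/
lemma exists_expanding_markov_map (ht : 0 < t) (hw : ∀ a, t * w a ≤ ∑ b with R a b, w b) :
    ∃ (c : ι → ι → ℝ) (T : (Σ a, Set.Ico 0 (w a)) → Σ a, Set.Ico 0 (w a)),
      ∀ p, R p.1 (T p).1 ∧ t * p.2 = c p.1 (T p).1 + (T p).2 := by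
  choose c hc using fun a => exists_offsets_partition {b | R a b} w
  suffices ∀ p : Σ a, Set.Ico 0 (w a), ∃ q : Σ a, Set.Ico 0 (w a),
      R p.1 q.1 ∧ t * p.2 = c p.1 q.1 + q.2 by
    choose T hT using this
    exact ⟨c, T, hT⟩
  rintro ⟨a, v, hv₀, hv⟩
  obtain ⟨b, hb, hvb⟩ := hc a (t * v) (mul_nonneg ht.le hv₀)
    ((mul_lt_mul_of_pos_left hv ht).trans_le (hw a))
  exact ⟨⟨b, _, hvb⟩, (Finset.mem_filter.1 hb).2, by ring⟩

lemma exists_expanding_coding (ht : 0 < t) (hw : ∀ a, t * w a ≤ ∑ b with R a b, w b) (a : ι) :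
    ∃ (B : ℝ) (code : Set.Ico 0 (w a) → ℕ → ι), (∀ v, IsAdmissible R (code v)) ∧
      (∀ v, code v 0 = a) ∧
      ∀ u v n, (∀ k ≤ n, code u k = code v k) → t ^ n * |(u : ℝ) - v| ≤ B := by
  obtain ⟨c, T, hT⟩ := exists_expanding_markov_map ht hw
  obtain ⟨B, hB⟩ := (Set.finite_range w).bddAbove
  refine ⟨B, fun v n => (T^[n] ⟨a, v⟩).1, fun v n => ?_, fun v => rfl, fun u v n huv =>
    pow_mul_abs_sub_le_of_itinerary_eq ht.le (fun p => (hT p).2) (fun b => hB ⟨b, rfl⟩) n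
      ⟨a, u⟩ ⟨a, v⟩ huv⟩
  simp only [Function.iterate_succ_apply']
  exact (hT _).1

lemma ofReal_le_dimH_codedPoint_admissible {s δ : ℝ} (hr₀ : 0 < r) (hr₁ : r < 1) (hs : 0 < s)
    (hδ : 0 < δ) (hrs : r ^ s = t⁻¹)
    (hsep : ∀ i j, IsAdmissible R i → IsAdmissible R j → i 0 ≠ j 0 →
      δ ≤ |codedPoint r d i - codedPoint r d j|)
    (hw : ∀ a, t * w a ≤ ∑ b with R a b, w b) {a : ι} (ha : 0 < w a) :
    ENNReal.ofReal s ≤ dimH (codedPoint r d '' {i | IsAdmissible R i}) := by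
  have ht : 0 < t := inv_pos.1 (hrs ▸ Real.rpow_pos_of_pos hr₀ s)
  obtain ⟨B, code, code_admissible, code_zero, code_expanding⟩ := exists_expanding_coding ht hw a
  have hB : 0 ≤ B := by simpa using code_expanding ⟨0, le_rfl, ha⟩ ⟨0, le_rfl, ha⟩ 0 fun _ _ => rfl
  let f (v : Set.Ico 0 (w a)) : ℝ := codedPoint r d (code v)
  have inverse_holder (u v : Set.Ico 0 (w a)) :
      edist u v ≤ (B / (r * δ) ^ s).toNNReal * edist (f u) (f v) ^ (s.toNNReal : ℝ) := by
    rw [Subtype.edist_eq, edist_dist, edist_dist, Real.dist_eq, Real.dist_eq,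
      Real.coe_toNNReal s hs.le, ENNReal.ofReal_rpow_of_nonneg (abs_nonneg _) hs.le,
      ← ENNReal.ofReal, ← ENNReal.ofReal_mul (by positivity)]
    exact ENNReal.ofReal_le_ofReal (abs_le_mul_rpow_abs_codedPoint_sub hr₀ hr₁ hs hδ hrs hsep
      (code_admissible u) (code_admissible v) ((code_zero u).trans (code_zero v).symm)
      (code_expanding u v))
  have dimH_domain : dimH (Set.univ : Set (Set.Ico 0 (w a))) = 1 := by
    rw [← isometry_subtype_coe.dimH_image, Set.image_univ, Subtype.range_coe]
    simpa using Real.dimH_of_nonempty_interior (s := Set.Ico 0 (w a)) (by simpa using ha)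
  have hs_ne : ENNReal.ofReal s ≠ 0 := by simpa using hs
  have one_le : 1 ≤ dimH (Set.range f) / ENNReal.ofReal s :=
    dimH_domain ▸ dimH_univ_le_of_edist_le_rpow (Real.toNNReal_pos.2 hs) inverse_holder
  rw [ENNReal.le_div_iff_mul_le (.inl hs_ne) (.inl ENNReal.ofReal_ne_top), one_mul] at one_le
  refine one_le.trans (dimH_mono ?_)
  rintro _ ⟨v, rfl⟩
  exact ⟨code v, code_admissible v, rfl⟩

lemma exists_finset_cover_codedPoint_admissible {m M : ℝ} (hr₀ : 0 ≤ r) (hr₁ : r < 1) (hm : 0 ≤ m)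
    (ht : 0 ≤ t) (hmw : ∀ a, m ≤ w a) (hw : ∀ a, ∑ b with R a b, w b ≤ t * w a)
    (hM : ∀ i : ℕ → ι, |codedPoint r d i| ≤ M) (n : ℕ) :
    ∀ a, ∃ E : Finset ℝ, m * E.card ≤ t ^ n * w a ∧
      ∀ i, IsAdmissible R i → i 0 = a → ∃ y ∈ E, dist (codedPoint r d i) y ≤ M * r ^ n := by
  induction n with
  | zero =>
    refine fun a => ⟨{0}, by simpa using hmw a, fun i _ _ => ⟨0, Finset.mem_singleton_self 0, ?_⟩⟩
    simpa using hM i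
  | succ n ih =>
    intro a
    choose E hcard hcover using ih
    refine ⟨({b | R a b} : Finset ι).biUnion fun b => (E b).image fun y => d a + r * y, ?_, ?_⟩
    · calc m * _ ≤ m * ∑ b with R a b, ((E b).card : ℝ) := by
            gcongr
            exact_mod_cast Finset.card_biUnion_le.trans
              (Finset.sum_le_sum fun b _ => Finset.card_image_le)
        _ ≤ ∑ b with R a b, t ^ n * w b := by
            rw [Finset.mul_sum]
            exact Finset.sum_le_sum fun b _ => hcard b
        _ = t ^ n * ∑ b with R a b, w b := Finset.mul_sum .. |>.symm
        _ ≤ t ^ n * (t * w a) := by gcongr; exact hw a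
        _ = t ^ (n + 1) * w a := by ring
    · rintro i hi rfl
      obtain ⟨y, hy, hdist⟩ := hcover (i 1) (dropSeq 1 i) (hi.dropSeq 1) rfl
      refine ⟨d (i 0) + r * y, Finset.mem_biUnion.2
        ⟨i 1, by simpa using hi 0, Finset.mem_image_of_mem _ hy⟩, ?_⟩
      rw [codedPoint_eq_add_mul (abs_lt.2 ⟨by linarith, hr₁⟩), dist_add_left, Real.dist_eq,
        ← mul_sub, abs_mul, abs_of_nonneg hr₀, pow_succ', mul_left_comm]
      exact mul_le_mul_of_nonneg_left hdist hr₀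

lemma dimH_codedPoint_admissible_le_ofReal {s : ℝ} (hr₀ : 0 < r) (hr₁ : r < 1) (hs : 0 ≤ s)
    (hrs : r ^ s = t⁻¹) (hw₀ : ∀ a, 0 < w a) (hw : ∀ a, ∑ b with R a b, w b ≤ t * w a) :
    dimH (codedPoint r d '' {i | IsAdmissible R i}) ≤ ENNReal.ofReal s := by
  have ht : 0 < t := inv_pos.1 (hrs ▸ Real.rpow_pos_of_pos hr₀ s)
  obtain ⟨M, hM₀, hM⟩ := exists_abs_codedPoint_le hr₀.le hr₁ d
  have dimH_start_le (a : ι) :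
      dimH (codedPoint r d '' {i | IsAdmissible R i ∧ i 0 = a}) ≤ ENNReal.ofReal s := by
    have : Nonempty ι := ⟨a⟩
    obtain ⟨a₀, ha₀⟩ := Finite.exists_min w
    choose E hcard hcover using fun n =>
      exists_finset_cover_codedPoint_admissible hr₀.le hr₁ (hw₀ a₀).le ht.le ha₀ hw hM n a
    refine dimH_le_of_geometric_cover (C := w a / w a₀) hr₀ hr₁ hs hrs hM₀ E (fun n => ?_) ?_
    · rw [div_mul_eq_mul_div, le_div_iff₀' (hw₀ a₀), mul_comm (w a)]
      exact hcard n
    · rintro n _ ⟨i, ⟨hi, hia⟩, rfl⟩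
      exact hcover n i hi hia
  have subset_iUnion : codedPoint r d '' {i | IsAdmissible R i} ⊆
      ⋃ a, codedPoint r d '' {i | IsAdmissible R i ∧ i 0 = a} := by
    rintro _ ⟨i, hi, rfl⟩
    exact Set.mem_iUnion.2 ⟨i 0, i, ⟨hi, rfl⟩, rfl⟩
  exact (dimH_mono subset_iUnion).trans ((dimH_iUnion _).trans_le (iSup_le dimH_start_le))

theorem dimH_codedPoint_admissible [Nonempty ι] {δ : ℝ} (hr₀ : 0 < r) (hr₁ : r < 1) (hδ : 0 < δ)
    (hsep : ∀ i j, IsAdmissible R i → IsAdmissible R j → i 0 ≠ j 0 →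
      δ ≤ |codedPoint r d i - codedPoint r d j|)
    (ht : 1 < t) (hw₀ : ∀ a, 0 < w a) (hw : ∀ a, ∑ b with R a b, w b = t * w a) :
    dimH (codedPoint r d '' {i | IsAdmissible R i}) =
      ENNReal.ofReal (Real.log t / -Real.log r) := by
  have hs : 0 < Real.log t / -Real.log r :=
    div_pos (Real.log_pos ht) (neg_pos.2 (Real.log_neg hr₀ hr₁))
  have hrs := rpow_log_div_neg_log hr₀ hr₁ (zero_lt_one.trans ht)
  exact le_antisymm
    (dimH_codedPoint_admissible_le_ofReal hr₀ hr₁ hs.le hrs hw₀ fun a => (hw a).le)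
    (ofReal_le_dimH_codedPoint_admissible hr₀ hr₁ hs hδ hrs hsep (fun a => (hw a).ge)
      (hw₀ (Classical.arbitrary ι)))

end MarkovShift

section Codings

/-- The points with exactly `m` digit sequences for the system `x ↦ r * x + d b`. -/
def multiplicitySet {ι : Type*} (r : ℝ) (d : ι → ℝ) (m : ℕ∞) : Set ℝ :=
  {x | (codedPoint r d ⁻¹' {x}).encard = m}

variable {r : ℝ} {d : Fin 4 → ℝ}

lemma codingApprox_eq_sum (n : ℕ) (i : ℕ → Fin 4) :
    codingApprox (fun b x => r * x + d b) i n = ∑ k ∈ Finset.range n, r ^ k * d (i k) := by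
  induction n generalizing i with
  | zero => rfl
  | succ n ih =>
    simp only [codingApprox, ih, Finset.sum_range_succ', Finset.mul_sum, pow_succ', pow_zero,
      one_mul, mul_assoc]

lemma codings_eq_preimage_codedPoint (hr : |r| < 1) (x : ℝ) :
    codings (fun b x => r * x + d b) x = codedPoint r d ⁻¹' {x} := by
  ext i
  have approx_tendsto :
      Tendsto (codingApprox (fun b x => r * x + d b) i) atTop (𝓝 (codedPoint r d i)) := by
    simpa only [codedPoint, funext fun n => codingApprox_eq_sum (r := r) (d := d) n i] using
      (summable_pow_mul_digit hr i).hasSum.tendsto_sum_nat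
  exact ⟨fun hx => tendsto_nhds_unique approx_tendsto hx, fun hx => hx ▸ approx_tendsto⟩

lemma setOf_encard_codings_eq_multiplicitySet (hr : |r| < 1) {K : Set ℝ} (hne : K.Nonempty)
    (hclosed : IsClosed K) (hmaps : ∀ b, Set.MapsTo (fun x => r * x + d b) K K) {m : ℕ∞}
    (hm : m ≠ 0) :
    {x ∈ K | (codings (fun b x => r * x + d b) x).encard = m} = multiplicitySet r d m := by
  ext x
  simp only [Set.mem_ofPred_eq, multiplicitySet, codings_eq_preimage_codedPoint hr,
    and_iff_right_iff_imp]
  intro hx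
  obtain ⟨i, rfl⟩ := Set.encard_ne_zero.1 (hx ▸ hm)
  exact codedPoint_mem_of_isClosed hr hne hclosed hmaps i

end Codings

section OverlappingSystem

/-- The translation parts of the maps `f₁, …, f₄`, indexed by `0, …, 3`. -/
noncomputable def digit (lam : ℝ) : Fin 4 → ℝ := ![0, 2 * lam, 3 * lam - lam ^ 2, 1 - lam]

/-- The transitions of the sequences avoiding the words `13` and `20`, which are the words `24`
and `31` in the indexing of the maps by `1, …, 4`. -/
def Allowed (a b : Fin 4) : Prop := (a, b) ≠ (1, 3) ∧ (a, b) ≠ (2, 0)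

instance : DecidableRel Allowed := fun _ _ => inferInstanceAs (Decidable (_ ∧ _))

/-- The exact overlap `f₂ ∘ f₄ = f₃ ∘ f₁`. -/
noncomputable def overlapMap (lam x : ℝ) : ℝ := 3 * lam - lam ^ 2 + lam ^ 2 * x

/-- Exchanges the words `13` and `20` at the positions `n, n + 1` of `i`, which `Fin.rev` does
letter by letter. -/
def flipAt (n : ℕ) (i : ℕ → Fin 4) : ℕ → Fin 4 :=
  fun k => if k = n ∨ k = n + 1 then (i k).rev else i k

lemma not_allowed_iff {a b : Fin 4} : ¬Allowed a b ↔ a = 1 ∧ b = 3 ∨ a = 2 ∧ b = 0 := by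
  decide +revert

lemma not_allowed_rev {a b : Fin 4} (h : ¬Allowed a b) : ¬Allowed a.rev b.rev := by
  decide +revert

lemma flipAt_apply_ne (n : ℕ) (i : ℕ → Fin 4) : flipAt n i n ≠ i n := by
  have rev_ne (a : Fin 4) : a.rev ≠ a := by decide +revert
  simpa [flipAt] using rev_ne (i n)

lemma flipAt_apply_of_lt {n k : ℕ} (hk : k < n) (i : ℕ → Fin 4) : flipAt n i k = i k :=
  if_neg (by omega)

lemma flipAt_left_injective (i : ℕ → Fin 4) : Function.Injective fun n => flipAt n i := by
  intro n m heq
  by_contra hne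
  wlog hnm : n < m generalizing n m
  · exact this heq.symm (Ne.symm hne) ((not_lt.1 hnm).lt_of_ne' hne)
  exact flipAt_apply_ne n i ((congrFun heq n).trans (flipAt_apply_of_lt hnm i))

variable {lam : ℝ}

lemma affine_digit_eq (lam : ℝ) :
    (fun b x => lam * x + digit lam b) =
      ![fun x => lam * x, fun x => lam * x + 2 * lam, fun x => lam * x + 3 * lam - lam ^ 2,
        fun x => lam * x + 1 - lam] := by
  funext b x
  fin_cases b <;> simp [digit] <;> ring

lemma antilipschitzWith_overlapMap (hlam : lam ≠ 0) :
    AntilipschitzWith ‖lam ^ 2‖₊⁻¹ (overlapMap lam) :=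
  .of_le_mul_dist fun x y => le_of_eq <| by
    have hnorm : ‖lam ^ 2‖ ≠ 0 := norm_ne_zero_iff.2 (pow_ne_zero 2 hlam)
    rw [overlapMap, overlapMap, dist_add_left, dist_eq_norm, dist_eq_norm, ← mul_sub, norm_mul,
      NNReal.coe_inv, coe_nnnorm, inv_mul_cancel_left₀ hnorm]

lemma codedPoint_eq_overlapMap (hlam : |lam| < 1) {i : ℕ → Fin 4} (hi : ¬Allowed (i 0) (i 1)) :
    codedPoint lam (digit lam) i = overlapMap lam (codedPoint lam (digit lam) (dropSeq 2 i)) := by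
  have digit_word : digit lam (i 0) + lam * digit lam (i 1) = 3 * lam - lam ^ 2 := by
    rcases not_allowed_iff.1 hi with ⟨h₀, h₁⟩ | ⟨h₀, h₁⟩ 
    · simp only [h₀, h₁, digit, Matrix.cons_val]
      ring
    · simp [h₀, h₁, digit]
  have expansion := codedPoint_eq_sum_add (d := digit lam) hlam 2 i
  rw [expansion, overlapMap, ← digit_word, Finset.sum_range_succ, Finset.sum_range_one, pow_zero,
    one_mul, pow_one]

lemma codedPoint_flipAt (hlam : |lam| < 1) {n : ℕ} {i : ℕ → Fin 4}
    (hi : ¬Allowed (i n) (i (n + 1))) :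
    codedPoint lam (digit lam) (flipAt n i) = codedPoint lam (digit lam) i := by
  have head_not_allowed : ¬Allowed (dropSeq n i 0) (dropSeq n i 1) := by
    simpa [dropSeq, add_comm 1] using hi
  have flip_not_allowed : ¬Allowed (dropSeq n (flipAt n i) 0) (dropSeq n (flipAt n i) 1) := by
    simpa [dropSeq, flipAt, add_comm 1] using not_allowed_rev hi
  have tail_eq : dropSeq 2 (dropSeq n (flipAt n i)) = dropSeq 2 (dropSeq n i) :=
    funext fun k => if_neg (by omega)
  rw [← sub_eq_zero, codedPoint_sub_eq_pow_mul hlam fun k hk => flipAt_apply_of_lt hk i,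
    codedPoint_eq_overlapMap hlam flip_not_allowed, tail_eq,
    codedPoint_eq_overlapMap hlam head_not_allowed, sub_self, mul_zero]

lemma isAdmissible_of_preimage_eq_singleton (hlam : |lam| < 1) {x : ℝ} {i : ℕ → Fin 4}
    (hi : codedPoint lam (digit lam) ⁻¹' {x} = {i}) : IsAdmissible Allowed i := fun n => by
  by_contra hn
  have hix : codedPoint lam (digit lam) i = x := hi.ge rfl
  exact flipAt_apply_ne n i (congrFun (hi.le ((codedPoint_flipAt hlam hn).trans hix)) n)

lemma exists_isAdmissible_dropSeq (hlam : |lam| < 1) {i : ℕ → Fin 4}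
    (hfin : (codedPoint lam (digit lam) ⁻¹' {codedPoint lam (digit lam) i}).Finite) :
    ∃ n, IsAdmissible Allowed (dropSeq n i) := by
  have finite_not_allowed : {n | ¬Allowed (i n) (i (n + 1))}.Finite :=
    (hfin.preimage (flipAt_left_injective i).injOn).subset fun n hn => codedPoint_flipAt hlam hn
  obtain ⟨n, hn⟩ := eventually_atTop.1
    (Nat.cofinite_eq_atTop ▸ eventually_cofinite.2 finite_not_allowed)
  exact ⟨n, fun k => by
    simpa only [dropSeq, Nat.add_right_comm] using hn (k + n) (Nat.le_add_left n k)⟩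

lemma lt_one_quarter_of_lt (hlam : lam < (5 - √21) / 2) : lam < 1 / 4 := by
  have : (9 / 2 : ℝ) < √21 := Real.lt_sqrt_of_sq_lt (by norm_num)
  linarith

lemma abs_lt_one_of_lt (hlam : 0 < lam ∧ lam < (5 - √21) / 2) : |lam| < 1 := by
  rw [abs_of_pos hlam.1]
  linarith [lt_one_quarter_of_lt hlam.2]

lemma one_sub_five_mul_add_sq_pos (hlam : lam < (5 - √21) / 2) :
    0 < 1 - 5 * lam + lam ^ 2 := by
  have sqrt_sq : √21 ^ 2 = 21 := Real.sq_sqrt (by norm_num)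
  have factor_pos : 0 < (5 - √21) / 2 - lam := sub_pos.2 hlam
  calc 0 < ((5 - √21) / 2 - lam) * ((5 - √21) / 2 - lam + √21) :=
        mul_pos factor_pos (add_pos_of_pos_of_nonneg factor_pos (Real.sqrt_nonneg 21))
    _ = 1 - 5 * lam + lam ^ 2 := by linear_combination (-1 / 4) * sqrt_sq

lemma codedPoint_digit_mem_Icc_zero_one (h₀ : 0 < lam) (h₁ : lam < 1 / 4) (i : ℕ → Fin 4) :
    codedPoint lam (digit lam) i ∈ Set.Icc 0 1 := by
  have digit_mem (b : Fin 4) : digit lam b ∈ Set.Icc 0 (1 - lam) := by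
    fin_cases b <;> simp only [digit, Set.mem_Icc, Fin.reduceFinMk, Matrix.cons_val] <;>
      constructor <;> nlinarith
  simpa [div_self (show 1 - lam ≠ 0 by linarith)] using
    codedPoint_mem_Icc h₀.le (by linarith) digit_mem i

lemma codedPoint_mem_Icc_digit_head (h₀ : 0 < lam) (h₁ : lam < 1 / 4) (i : ℕ → Fin 4) :
    codedPoint lam (digit lam) i ∈ Set.Icc (digit lam (i 0)) (digit lam (i 0) + lam) := by
  obtain ⟨htail₀, htail₁⟩ := codedPoint_digit_mem_Icc_zero_one h₀ h₁ (dropSeq 1 i)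
  rw [codedPoint_eq_add_mul (abs_lt.2 ⟨by linarith, by linarith⟩)]
  constructor <;> nlinarith

lemma codedPoint_le_of_head_ne_three (h₀ : 0 < lam) (h₁ : lam < 1 / 4) {i : ℕ → Fin 4}
    (hi : i 0 ≠ 3) : codedPoint lam (digit lam) i ≤ 4 * lam - lam ^ 2 := by
  refine (codedPoint_mem_Icc_digit_head h₀ h₁ i).2.trans ?_
  generalize i 0 = b at hi
  fin_cases b <;> simp [digit] at hi ⊢ <;> nlinarith

lemma le_codedPoint_of_head_ne_zero (h₀ : 0 < lam) (h₁ : lam < 1 / 4) {i : ℕ → Fin 4}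
    (hi : i 0 ≠ 0) : 2 * lam ≤ codedPoint lam (digit lam) i := by
  refine le_trans ?_ (codedPoint_mem_Icc_digit_head h₀ h₁ i).1
  generalize i 0 = b at hi
  fin_cases b <;> simp [digit] at hi ⊢ <;> nlinarith

lemma digit_add_min_le_digit (h₀ : 0 < lam) (h₁ : lam < 1 / 4) {a b : Fin 4} (hab : a < b)
    (hne : ¬(a = 1 ∧ b = 2)) :
    digit lam a + lam + min lam (1 - 5 * lam + lam ^ 2) ≤ digit lam b := by
  have min_le₀ := min_le_left lam (1 - 5 * lam + lam ^ 2)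
  have min_le₁ := min_le_right lam (1 - 5 * lam + lam ^ 2)
  have sq_le : lam ^ 2 ≤ lam := by nlinarith
  generalize min lam (1 - 5 * lam + lam ^ 2) = δ at *
  fin_cases a <;> fin_cases b <;> simp [digit] at hab hne ⊢ <;> linarith

lemma mul_le_codedPoint_sub_of_heads_one_two (h₀ : 0 < lam) (h₁ : lam < 1 / 4) {i j : ℕ → Fin 4}
    (hi₀ : i 0 = 1) (hi₁ : i 1 ≠ 3) (hj₀ : j 0 = 2) :
    lam * (1 - 5 * lam + lam ^ 2) ≤
      codedPoint lam (digit lam) j - codedPoint lam (digit lam) i := by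
  have hj : 3 * lam - lam ^ 2 ≤ codedPoint lam (digit lam) j := by
    simpa [hj₀, digit] using (codedPoint_mem_Icc_digit_head h₀ h₁ j).1
  have tail_le := mul_le_mul_of_nonneg_left
    (codedPoint_le_of_head_ne_three h₀ h₁ (i := dropSeq 1 i) hi₁) h₀.le
  have expand_i : codedPoint lam (digit lam) i =
      2 * lam + lam * codedPoint lam (digit lam) (dropSeq 1 i) := by
    rw [codedPoint_eq_add_mul (abs_lt.2 ⟨by linarith, by linarith⟩), hi₀]
    rfl
  linarith

lemma sq_le_codedPoint_sub_of_heads_two_one (h₀ : 0 < lam) (h₁ : lam < 1 / 4) {i j : ℕ → Fin 4}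
    (hi₀ : i 0 = 2) (hi₁ : i 1 ≠ 0) (hj₀ : j 0 = 1) :
    lam * lam ≤ codedPoint lam (digit lam) i - codedPoint lam (digit lam) j := by
  have hj : codedPoint lam (digit lam) j ≤ 2 * lam + lam := by
    simpa [hj₀, digit] using (codedPoint_mem_Icc_digit_head h₀ h₁ j).2
  have le_tail := mul_le_mul_of_nonneg_left
    (le_codedPoint_of_head_ne_zero h₀ h₁ (i := dropSeq 1 i) hi₁) h₀.le
  have expand_i : codedPoint lam (digit lam) i =
      3 * lam - lam ^ 2 + lam * codedPoint lam (digit lam) (dropSeq 1 i) := by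
    rw [codedPoint_eq_add_mul (abs_lt.2 ⟨by linarith, by linarith⟩), hi₀]
    rfl
  linarith

lemma mul_min_le_abs_codedPoint_sub (h₀ : 0 < lam) (h₁ : lam < 1 / 4)
    (hgap : 0 ≤ 1 - 5 * lam + lam ^ 2) {i j : ℕ → Fin 4}
    (hi : Allowed (i 0) (i 1)) (hij : i 0 ≠ j 0) :
    lam * min lam (1 - 5 * lam + lam ^ 2) ≤
      |codedPoint lam (digit lam) i - codedPoint lam (digit lam) j| := by
  obtain ⟨hi_ge, hi_le⟩ := codedPoint_mem_Icc_digit_head h₀ h₁ i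
  obtain ⟨hj_ge, hj_le⟩ := codedPoint_mem_Icc_digit_head h₀ h₁ j
  have mul_min_le_min :
      lam * min lam (1 - 5 * lam + lam ^ 2) ≤ min lam (1 - 5 * lam + lam ^ 2) :=
    mul_le_of_le_one_left (le_min h₀.le hgap) (by linarith)
  rcases lt_or_gt_of_ne hij with hlt | hgt
  · rw [abs_sub_comm]
    refine le_trans ?_ (le_abs_self _)
    by_cases heads : i 0 = 1 ∧ j 0 = 2
    · exact (mul_le_mul_of_nonneg_left (min_le_right _ _) h₀.le).trans
        (mul_le_codedPoint_sub_of_heads_one_two h₀ h₁ heads.1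
          (fun h₃ => hi.1 (Prod.ext heads.1 h₃)) heads.2)
    · linarith [digit_add_min_le_digit h₀ h₁ hlt heads]
  · refine le_trans ?_ (le_abs_self _)
    by_cases heads : j 0 = 1 ∧ i 0 = 2
    · exact (mul_le_mul_of_nonneg_left (min_le_left _ _) h₀.le).trans
        (sq_le_codedPoint_sub_of_heads_two_one h₀ h₁ heads.2
          (fun hz => hi.2 (Prod.ext heads.2 hz)) heads.1)
    · linarith [digit_add_min_le_digit h₀ h₁ hgt heads]

lemma head_eq_of_codedPoint_eq (hlam : 0 < lam ∧ lam < (5 - √21) / 2) {i j : ℕ → Fin 4}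
    (hi : Allowed (i 0) (i 1))
    (hij : codedPoint lam (digit lam) i = codedPoint lam (digit lam) j) : i 0 = j 0 := by
  by_contra hne
  have hgap := one_sub_five_mul_add_sq_pos hlam.2
  have hsep := mul_min_le_abs_codedPoint_sub hlam.1 (lt_one_quarter_of_lt hlam.2) hgap.le hi hne
  rw [hij, sub_self, abs_zero] at hsep
  exact hsep.not_gt (mul_pos hlam.1 (lt_min hlam.1 hgap))

lemma multiplicitySet_one_eq (hlam : 0 < lam ∧ lam < (5 - √21) / 2) :
    multiplicitySet lam (digit lam) 1 =
      codedPoint lam (digit lam) '' {i | IsAdmissible Allowed i} := by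
  have hlt := abs_lt_one_of_lt hlam
  ext x
  constructor
  · intro hx
    obtain ⟨i, hi⟩ := Set.encard_eq_one.1 hx
    exact ⟨i, isAdmissible_of_preimage_eq_singleton hlt hi, hi.ge rfl⟩
  · rintro ⟨i, hi, rfl⟩
    refine Set.encard_eq_one.2 ⟨i, Set.Subset.antisymm (fun j hj => ?_) fun j hj => hj ▸ rfl⟩
    exact (eq_of_codedPoint_eq hlam.1 (abs_lt.1 hlt).2
      (fun i j hi hne heq => hne (head_eq_of_codedPoint_eq hlam (hi 0) heq)) hi hj.symm).symm

lemma dimH_multiplicitySet_le (hlam : 0 < lam ∧ lam < (5 - √21) / 2) {m : ℕ∞} (hm₀ : m ≠ 0)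
    (hm : m ≠ ⊤) :
    dimH (multiplicitySet lam (digit lam) m) ≤ dimH (multiplicitySet lam (digit lam) 1) := by
  have hlt := abs_lt_one_of_lt hlam
  rw [multiplicitySet_one_eq hlam]
  refine (dimH_mono ?_).trans (dimH_image_codedPoint_eventually_le hlt _)
  intro x (hx : (codedPoint lam (digit lam) ⁻¹' {x}).encard = m)
  obtain ⟨i, rfl⟩ := Set.encard_ne_zero.1 (hx ▸ hm₀)
  exact ⟨i, exists_isAdmissible_dropSeq hlt (Set.encard_ne_top_iff.1 (hx ▸ hm)), rfl⟩

lemma preimage_overlapMap_eq (hlam : 0 < lam ∧ lam < (5 - √21) / 2) {x : ℝ}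
    (hx : (codedPoint lam (digit lam) ⁻¹' {x}).Nonempty) :
    codedPoint lam (digit lam) ⁻¹' {overlapMap lam x} =
      (consSeq 1 ∘ consSeq 3) '' (codedPoint lam (digit lam) ⁻¹' {x}) ∪
        (consSeq 2 ∘ consSeq 0) '' (codedPoint lam (digit lam) ⁻¹' {x}) := by
  have hlt := abs_lt_one_of_lt hlam
  have coded_cons {a b : Fin 4} (hab : ¬Allowed a b) {j : ℕ → Fin 4}
      (hj : codedPoint lam (digit lam) j = x) :
      codedPoint lam (digit lam) (consSeq a (consSeq b j)) = overlapMap lam x :=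
    hj ▸ codedPoint_eq_overlapMap hlt (i := consSeq a (consSeq b j)) hab
  refine Set.Subset.antisymm (fun i (hi : _ = _) => ?_) (Set.union_subset ?_ ?_)
  · obtain ⟨j, hj⟩ := hx
    have head_not_allowed : ¬Allowed (i 0) (i 1) := fun hallowed => by
      have head_one : i 0 = 1 :=
        head_eq_of_codedPoint_eq hlam hallowed
          (hi.trans (coded_cons (by decide : ¬Allowed 1 3) hj).symm)
      have head_two : i 0 = 2 :=
        head_eq_of_codedPoint_eq hlam hallowed
          (hi.trans (coded_cons (by decide : ¬Allowed 2 0) hj).symm)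
      exact absurd (head_one.symm.trans head_two) (by decide)
    have tail_mem : codedPoint lam (digit lam) (dropSeq 2 i) = x :=
      (antilipschitzWith_overlapMap hlam.1.ne').injective
        ((codedPoint_eq_overlapMap hlt head_not_allowed).symm.trans hi)
    have hcons := consSeq_consSeq_dropSeq_two i
    rcases not_allowed_iff.1 head_not_allowed with ⟨h₀, h₁⟩ | ⟨h₀, h₁⟩ <;> rw [h₀, h₁] at hcons
    · exact .inl ⟨_, tail_mem, hcons⟩
    · exact .inr ⟨_, tail_mem, hcons⟩
  · exact Set.image_subset_iff.2 fun j hj => coded_cons (by decide) hj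
  · exact Set.image_subset_iff.2 fun j hj => coded_cons (by decide) hj

lemma encard_preimage_overlapMap (hlam : 0 < lam ∧ lam < (5 - √21) / 2) {x : ℝ}
    (hx : (codedPoint lam (digit lam) ⁻¹' {x}).Nonempty) :
    (codedPoint lam (digit lam) ⁻¹' {overlapMap lam x}).encard =
      2 * (codedPoint lam (digit lam) ⁻¹' {x}).encard := by
  have cons_injective (a b : Fin 4) : Function.Injective (consSeq a ∘ consSeq b) :=
    (consSeq_injective a).comp (consSeq_injective b)
  have images_disjoint (S : Set (ℕ → Fin 4)) :
      Disjoint ((consSeq 1 ∘ consSeq 3) '' S) ((consSeq 2 ∘ consSeq 0) '' S) := by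
    rw [Set.disjoint_left]
    rintro _ ⟨i, -, rfl⟩ ⟨j, -, hij⟩
    exact absurd (congrFun hij 0) (by simp [consSeq])
  rw [preimage_overlapMap_eq hlam hx, Set.encard_union_eq (images_disjoint _),
    (cons_injective 1 3).encard_image, (cons_injective 2 0).encard_image, two_mul]

lemma dimH_multiplicitySet_le_two_mul (hlam : 0 < lam ∧ lam < (5 - √21) / 2) {m : ℕ∞}
    (hm : m ≠ 0) :
    dimH (multiplicitySet lam (digit lam) m) ≤ dimH (multiplicitySet lam (digit lam) (2 * m)) := by
  refine ((antilipschitzWith_overlapMap hlam.1.ne').le_dimH_image _).trans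
    (dimH_mono (Set.image_subset_iff.2 ?_))
  intro x (hx : (codedPoint lam (digit lam) ⁻¹' {x}).encard = m)
  have hne := Set.encard_ne_zero.1 (hx ▸ hm)
  exact (encard_preimage_overlapMap hlam hne).trans (by rw [hx])

lemma dimH_multiplicitySet_two_pow (hlam : 0 < lam ∧ lam < (5 - √21) / 2) (k : ℕ) :
    dimH (multiplicitySet lam (digit lam) (2 ^ k)) = dimH (multiplicitySet lam (digit lam) 1) := by
  have two_pow_ne_zero (k : ℕ) : (2 : ℕ∞) ^ k ≠ 0 := pow_ne_zero k two_ne_zero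
  refine le_antisymm (dimH_multiplicitySet_le hlam (two_pow_ne_zero k)
    (by exact_mod_cast ENat.natCast_ne_top (2 ^ k))) ?_
  induction k with
  | zero => rw [pow_zero]
  | succ k ih =>
    rw [pow_succ']
    exact ih.trans (dimH_multiplicitySet_le_two_mul hlam (two_pow_ne_zero k))

/-- The right Perron eigenvector of the transition matrix of `Allowed`, with eigenvalue
`2 + √2`. -/
noncomputable def perronWeight : Fin 4 → ℝ := ![√2, 1, 1, √2]

lemma perronWeight_pos (a : Fin 4) : 0 < perronWeight a := by
  fin_cases a <;> simp [perronWeight]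

lemma sum_perronWeight (a : Fin 4) :
    ∑ b with Allowed a b, perronWeight b = (2 + √2) * perronWeight a := by
  have sqrt_mul : √2 * √2 = (2 : ℝ) := Real.mul_self_sqrt zero_le_two
  rw [Finset.sum_filter, Fin.sum_univ_four]
  fin_cases a <;> simp [Allowed, perronWeight] <;> linarith

lemma dimH_multiplicitySet_one (hlam : 0 < lam ∧ lam < (5 - √21) / 2) :
    dimH (multiplicitySet lam (digit lam) 1) =
      ENNReal.ofReal (Real.log (2 + √2) / -Real.log lam) := by
  have hgap := one_sub_five_mul_add_sq_pos hlam.2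
  have hquarter := lt_one_quarter_of_lt hlam.2
  rw [multiplicitySet_one_eq hlam]
  exact dimH_codedPoint_admissible hlam.1 (hquarter.trans (by norm_num))
    (mul_pos hlam.1 (lt_min hlam.1 hgap))
    (fun i j hi _ hij => mul_min_le_abs_codedPoint_sub hlam.1 hquarter hgap.le (hi 0) hij)
    (by linarith [Real.sqrt_nonneg 2]) perronWeight_pos sum_perronWeight

lemma mapsTo_of_eq_union_image {α : Type*} {f : Fin 4 → α → α} {K : Set α}
    (hK : K = f 0 '' K ∪ f 1 '' K ∪ f 2 '' K ∪ f 3 '' K) (b : Fin 4) : Set.MapsTo (f b) K K := by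
  intro x hx
  have hfx : f b x ∈ f b '' K := Set.mem_image_of_mem _ hx
  rw [hK]
  fin_cases b
  exacts [.inl (.inl (.inl hfx)), .inl (.inl (.inr hfx)), .inl (.inr hfx), .inr hfx]

end OverlappingSystem

/-- for every `k ≥ 0`, `dim_H (U_{2^k}) = dim_H (U_1)
= log (2 + √2) / (- log λ)`. -/
theorem statement2
    (lam : ℝ) (hlam : 0 < lam ∧ lam < (5 - Real.sqrt 21) / 2)
    (f : Fin 4 → ℝ → ℝ)
    (hf : f = ![fun x => lam * x, fun x => lam * x + 2 * lam,
      fun x => lam * x + 3 * lam - lam ^ 2, fun x => lam * x + 1 - lam])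
    (K : Set ℝ) (hKne : K.Nonempty) (hKcpt : IsCompact K)
    (hK : K = f 0 '' K ∪ f 1 '' K ∪ f 2 '' K ∪ f 3 '' K)
    (U : ℕ → Set ℝ)
    (hU : ∀ k : ℕ, U k = {x ∈ K | (codings f x).encard = (k : ℕ∞)})
    (k : ℕ) :
    dimH (U (2 ^ k)) = dimH (U 1) ∧
      dimH (U 1) = ENNReal.ofReal (Real.log (2 + Real.sqrt 2) / (-Real.log lam)) := by
  have maps_K := mapsTo_of_eq_union_image hK
  rw [← affine_digit_eq] at hf
  subst hf
  have U_eq (m : ℕ) (hm : m ≠ 0) : U m = multiplicitySet lam (digit lam) m := by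
    rw [hU]
    exact setOf_encard_codings_eq_multiplicitySet (abs_lt_one_of_lt hlam) hKne hKcpt.isClosed
      maps_K (Nat.cast_ne_zero.2 hm)
  rw [U_eq _ (pow_ne_zero k two_ne_zero), U_eq 1 one_ne_zero, Nat.cast_pow, Nat.cast_one]
  exact ⟨dimH_multiplicitySet_two_pow hlam k, dimH_multiplicitySet_one hlam⟩
end

section
/- Every x ∈ K either has exactly 2^k codings for some integer k ≥ 0, or its set of codings is uncountable. -/
/-!
Write `N x` for the number of codings of `x`. Splitting codings by their first digit gives
`N x = ∑ a, N (f_a⁻¹ x)`. The only two pieces `f_a [0, 1]` that meet are those of `f_2` and `f_3`,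
and they meet in `f_2 f_4 [0, 1] = f_3 f_1 [0, 1]` with `f_2 ∘ f_4 = f_3 ∘ f_1`. Hence deleting the
first digit of a coding of `x` leads to a point `y` with `N x = N y` or `N x = 2 * N y`.
If `x` has countably many codings, they form a nonempty countable closed set of sequences, which by
Baire's theorem has an isolated point; a sufficiently long tail of that coding codes a point `y`
with `N y = 1`, so `N x` is a power of two.
-/

open Filter Topology

namespace CodingCount

open Set

/-! ### Fibres of maps on sequence spaces -/

section Sequences

variable {α X : Type*}

/-- The sequence obtained from `i` by prepending the term `a`. -/
def seqCons (a : α) (i : ℕ → α) : ℕ → α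
  | 0 => a
  | n + 1 => i n

/-- The sequence obtained from `i` by deleting its first term, that is, the shift of `i`. -/
def seqTail (i : ℕ → α) : ℕ → α := fun n => i (n + 1)

theorem seqCons_head_seqTail (i : ℕ → α) : seqCons (i 0) (seqTail i) = i := by
  funext n; cases n <;> rfl

theorem seqCons_injective (a : α) : Function.Injective (seqCons a) :=
  fun _ _ h => congrArg seqTail h

theorem seqCons_mem_cylinder {i j : ℕ → α} {n : ℕ} (hj : j ∈ PiNat.cylinder (seqTail i) n) :
    seqCons (i 0) j ∈ PiNat.cylinder i (n + 1) := by
  rintro (_ | m) hm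
  · rfl
  · exact hj m (by omega)

theorem exists_isOpen_singleton_of_countable [TopologicalSpace X] [T1Space X] [BaireSpace X]
    [Countable X] [Nonempty X] : ∃ x : X, IsOpen {x} := by
  obtain ⟨x, hx⟩ := nonempty_interior_of_iUnion_of_closed (fun x : X => isClosed_singleton)
    (iUnion_of_singleton X)
  exact ⟨x, interior_eq_iff_isOpen.1 (hx.subset_singleton_iff.1 interior_subset)⟩

theorem exists_inter_cylinder_eq_singleton [TopologicalSpace α] [DiscreteTopology α]
    {s : Set (ℕ → α)} (hs : IsClosed s) (hne : s.Nonempty) (hc : s.Countable) :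
    ∃ i ∈ s, ∃ n, s ∩ PiNat.cylinder i n = {i} := by
  have := hc.to_subtype
  have := hne.to_subtype
  have := hs.isCompletelyMetrizableSpace
  obtain ⟨⟨i, hi⟩, hopen⟩ := exists_isOpen_singleton_of_countable (X := s)
  obtain ⟨U, hU, hUi⟩ := isOpen_induced_iff.1 hopen
  have hmem {j : ℕ → α} (hj : j ∈ s) : j ∈ U ↔ j = i := by
    simpa using Set.ext_iff.1 hUi ⟨j, hj⟩
  obtain ⟨_, ⟨j, n, rfl⟩, hij, hjU⟩ :=
    (PiNat.isTopologicalBasis_cylinders fun _ => α).exists_subset_of_mem_open ((hmem hi).2 rfl) hU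
  rw [← PiNat.mem_cylinder_iff_eq.1 hij] at hjU
  refine ⟨i, hi, n, Subset.antisymm (fun k hk => (hmem hk.1).1 (hjU hk.2)) ?_⟩
  exact singleton_subset_iff.2 ⟨hi, PiNat.self_mem_cylinder i n⟩

variable {π : (ℕ → α) → X} {p : ℕ∞}

theorem encard_fiber_eq_pow_of_inter_cylinder
    (hcons : ∀ a i j, π i = π j → π (seqCons a i) = π (seqCons a j))
    (htail : ∀ i, ∃ e : ℕ, (π ⁻¹' {π i}).encard = p ^ e * (π ⁻¹' {π (seqTail i)}).encard)
    {n : ℕ} {i : ℕ → α} (hi : π ⁻¹' {π i} ∩ PiNat.cylinder i n ⊆ {i}) :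
    ∃ k : ℕ, (π ⁻¹' {π i}).encard = p ^ k := by
  induction n generalizing i with
  | zero =>
    rw [PiNat.cylinder_zero, inter_univ] at hi
    exact ⟨0, by rw [Subset.antisymm hi (singleton_subset_iff.2 rfl), encard_singleton, pow_zero]⟩
  | succ n ih =>
    have htail_isolated :
        π ⁻¹' {π (seqTail i)} ∩ PiNat.cylinder (seqTail i) n ⊆ {seqTail i} := by
      rintro j ⟨hj, hjn⟩
      have hπ : π (seqCons (i 0) j) = π i := by
        rw [hcons (i 0) _ _ hj, seqCons_head_seqTail]
      exact congrArg seqTail (hi ⟨hπ, seqCons_mem_cylinder hjn⟩)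
    obtain ⟨k, hk⟩ := ih htail_isolated
    obtain ⟨e, he⟩ := htail i
    exact ⟨e + k, by rw [he, hk, pow_add]⟩

theorem encard_fiber_eq_pow_or_not_countable [TopologicalSpace α] [DiscreteTopology α]
    [TopologicalSpace X] [T1Space X] (hπ : Continuous π)
    (hcons : ∀ a i j, π i = π j → π (seqCons a i) = π (seqCons a j))
    (htail : ∀ i, ∃ e : ℕ, (π ⁻¹' {π i}).encard = p ^ e * (π ⁻¹' {π (seqTail i)}).encard)
    {x : X} (hx : x ∈ range π) :
    (∃ k : ℕ, (π ⁻¹' {x}).encard = p ^ k) ∨ ¬ (π ⁻¹' {x}).Countable := by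
  refine or_iff_not_imp_right.2 fun hc => ?_
  obtain ⟨i, rfl, n, hin⟩ := exists_inter_cylinder_eq_singleton
    (isClosed_singleton.preimage hπ) hx (not_not.1 hc)
  exact encard_fiber_eq_pow_of_inter_cylinder hcons htail hin.subset

end Sequences

/-! ### Homogeneous affine systems on the line -/

section Affine

variable {α : Type*} {l : ℝ} {d : α → ℝ} {x : ℝ}

/-- The point coded by the digit sequence `i` in the iterated function system of the maps
`x ↦ l * x + d a`: the sum `∑ lⁿ d(iₙ)`, to which the finite compositions applied to `0` converge
if `|l| < 1` and `d` is bounded. -/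
noncomputable def codedPoint (l : ℝ) (d : α → ℝ) (i : ℕ → α) : ℝ := ∑' n, l ^ n * d (i n)

/-- The number of digit sequences coding `x` in the iterated function system of the maps
`x ↦ l * x + d a`, with value `⊤` if there are infinitely many. -/
noncomputable def codingCount (l : ℝ) (d : α → ℝ) (x : ℝ) : ℕ∞ :=
  (codedPoint l d ⁻¹' {x}).encard

theorem exists_summable_forall_norm_pow_mul_le [Finite α] (hl : |l| < 1) (d : α → ℝ) :
    ∃ u : ℕ → ℝ, Summable u ∧ ∀ n a, ‖l ^ n * d a‖ ≤ u n := by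
  obtain ⟨C, hC⟩ := (finite_range fun a => ‖d a‖).bddAbove
  refine ⟨fun n => |l| ^ n * C, (summable_geometric_of_lt_one (abs_nonneg l) hl).mul_right C,
    fun n a => ?_⟩
  rw [norm_mul, norm_pow, Real.norm_eq_abs]
  exact mul_le_mul_of_nonneg_left (hC (mem_range_self a)) (by positivity)

theorem summable_pow_mul_digit [Finite α] (hl : |l| < 1) (d : α → ℝ) (i : ℕ → α) :
    Summable fun n => l ^ n * d (i n) := by
  obtain ⟨u, hu, hle⟩ := exists_summable_forall_norm_pow_mul_le hl d
  exact hu.of_norm_bounded fun n => hle n (i n)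

theorem continuous_codedPoint [Finite α] [TopologicalSpace α] [DiscreteTopology α]
    (hl : |l| < 1) (d : α → ℝ) : Continuous (codedPoint l d) := by
  obtain ⟨u, hu, hle⟩ := exists_summable_forall_norm_pow_mul_le hl d
  refine continuous_tsum (fun n => ?_) hu fun n i => hle n (i n)
  exact continuous_const.mul (continuous_of_discreteTopology.comp (continuous_apply n))

theorem codedPoint_seqCons [Finite α] (hl : |l| < 1) (d : α → ℝ) (a : α) (i : ℕ → α) :
    codedPoint l d (seqCons a i) = l * codedPoint l d i + d a := by
  rw [codedPoint, (summable_pow_mul_digit hl d (seqCons a i)).tsum_eq_zero_add, codedPoint,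
    ← tsum_mul_left, add_comm]
  simp only [seqCons, pow_zero, one_mul, pow_succ', mul_assoc]

theorem codedPoint_mem_Icc (hl₀ : 0 ≤ l) (hl₁ : l < 1) (hd : ∀ a, d a ∈ Icc 0 (1 - l))
    (i : ℕ → α) : codedPoint l d i ∈ Icc 0 1 := by
  have hgeom : HasSum (fun n : ℕ => l ^ n * (1 - l)) 1 := by
    simpa only [inv_mul_cancel₀ (sub_ne_zero.2 hl₁.ne')] using
      (hasSum_geometric_of_lt_one hl₀ hl₁).mul_right (1 - l)
  have hnonneg (n : ℕ) : 0 ≤ l ^ n * d (i n) := mul_nonneg (pow_nonneg hl₀ n) (hd _).1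
  have hle (n : ℕ) : l ^ n * d (i n) ≤ l ^ n * (1 - l) :=
    mul_le_mul_of_nonneg_left (hd _).2 (pow_nonneg hl₀ n)
  exact ⟨tsum_nonneg hnonneg,
    hasSum_le hle (hgeom.summable.of_nonneg_of_le hnonneg hle).hasSum hgeom⟩

theorem mem_range_codedPoint_of_subset_iUnion [Finite α] (hl : |l| < 1) {K : Set ℝ}
    (hK : Bornology.IsBounded K) (hsub : K ⊆ ⋃ a, (fun y => l * y + d a) '' K) (hx : x ∈ K) :
    x ∈ range (codedPoint l d) := by
  have hpre : ∀ y ∈ K, ∃ a, ∃ z ∈ K, l * z + d a = y := fun y hy => mem_iUnion.1 (hsub hy)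
  have : Nonempty α := (hpre x hx).nonempty
  choose! digit next hnext hdigit using hpre
  have horbit (n : ℕ) : next^[n] x ∈ K := (show MapsTo next K K from hnext).iterate n hx
  refine ⟨fun n => digit (next^[n] x), ?_⟩
  have hterm (n : ℕ) : l ^ n * d (digit (next^[n] x)) =
      l ^ n * next^[n] x - l ^ (n + 1) * next^[n + 1] x := by
    rw [Function.iterate_succ_apply']
    linear_combination l ^ n * hdigit _ (horbit n)
  have hremainder : Tendsto (fun n => l ^ n * next^[n] x) atTop (𝓝 0) := by
    obtain ⟨C, hC⟩ := hK.exists_norm_le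
    exact (tendsto_pow_atTop_nhds_zero_of_abs_lt_one hl).zero_mul_isBoundedUnder_le
      (isBoundedUnder_of ⟨C, fun n => hC _ (horbit n)⟩)
  have hsum := (summable_pow_mul_digit hl d fun n => digit (next^[n] x)).hasSum.tendsto_sum_nat
  simp only [hterm, Finset.sum_range_sub' fun n => l ^ n * next^[n] x] at hsum
  simpa [codedPoint, hterm] using tendsto_nhds_unique hsum (hremainder.const_sub _)

theorem preimage_codedPoint_singleton_eq_iUnion [Finite α] (hl : |l| < 1) (hl₀ : l ≠ 0) :
    codedPoint l d ⁻¹' {x} = ⋃ a, seqCons a '' (codedPoint l d ⁻¹' {(x - d a) / l}) := by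
  ext i
  simp only [mem_iUnion, mem_image, mem_preimage, mem_singleton_iff, eq_div_iff hl₀]
  constructor
  · rintro rfl
    refine ⟨i 0, seqTail i, ?_, seqCons_head_seqTail i⟩
    nth_rw 2 [← seqCons_head_seqTail i]
    rw [codedPoint_seqCons hl]
    ring
  · rintro ⟨a, j, hj, rfl⟩
    rw [codedPoint_seqCons hl]
    linarith

theorem codingCount_eq_sum [Fintype α] (hl : |l| < 1) (hl₀ : l ≠ 0) :
    codingCount l d x = ∑ a, codingCount l d ((x - d a) / l) := by
  have hdisj : Pairwise (Function.onFun Disjoint fun a =>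
      seqCons a '' (codedPoint l d ⁻¹' {(x - d a) / l})) := fun a b hab => by
    refine disjoint_left.2 ?_
    rintro _ ⟨i, -, rfl⟩ ⟨j, -, hj⟩
    exact hab (congrFun hj 0).symm
  simp only [codingCount]
  rw [preimage_codedPoint_singleton_eq_iUnion hl hl₀, encard_iUnion_of_finite hdisj,
    finsum_eq_sum_of_fintype]
  simp only [(seqCons_injective _).encard_image]

theorem codingCount_eq_zero (hl₀ : 0 ≤ l) (hl₁ : l < 1) (hd : ∀ a, d a ∈ Icc 0 (1 - l))
    (hx : x ∉ Icc 0 1) : codingCount l d x = 0 := by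
  refine encard_eq_zero.2 (eq_empty_of_forall_notMem fun i hi => hx ?_)
  rw [← show codedPoint l d i = x from hi]
  exact codedPoint_mem_Icc hl₀ hl₁ hd i

theorem codingCount_div_eq_zero (hl₀ : 0 < l) (hl₁ : l < 1) (hd : ∀ a, d a ∈ Icc 0 (1 - l))
    {a : α} (hx : x ∉ Icc (d a) (d a + l)) : codingCount l d ((x - d a) / l) = 0 := by
  refine codingCount_eq_zero hl₀.le hl₁ hd fun h => hx ?_
  have hlower := (le_div_iff₀ hl₀).1 h.1
  have hupper := (div_le_one hl₀).1 h.2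
  constructor <;> linarith

theorem codingCount_eq_of_forall_ne [Finite α] (hl₀ : 0 < l) (hl₁ : l < 1)
    (hd : ∀ a, d a ∈ Icc 0 (1 - l)) (a : α) (hx : ∀ b ≠ a, x ∉ Icc (d b) (d b + l)) :
    codingCount l d x = codingCount l d ((x - d a) / l) := by
  cases nonempty_fintype α
  rw [codingCount_eq_sum (abs_lt.2 ⟨by linarith, hl₁⟩) hl₀.ne']
  exact Fintype.sum_eq_single a fun b hb => codingCount_div_eq_zero hl₀ hl₁ hd (hx b hb)

theorem codingApprox_eq_sum {d : Fin 4 → ℝ} {f : Fin 4 → ℝ → ℝ}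
    (hf : ∀ a x, f a x = l * x + d a) (n : ℕ) (i : ℕ → Fin 4) :
    codingApprox f i n = ∑ m ∈ Finset.range n, l ^ m * d (i m) := by
  induction n generalizing i with
  | zero => rfl
  | succ n ih =>
    rw [codingApprox, ih, hf, Finset.sum_range_succ', Finset.mul_sum, pow_zero, one_mul]
    simp only [pow_succ', mul_assoc]

theorem codings_eq_preimage_codedPoint {d : Fin 4 → ℝ} {f : Fin 4 → ℝ → ℝ}
    (hf : ∀ a x, f a x = l * x + d a) (hl : |l| < 1) (x : ℝ) :
    codings f x = codedPoint l d ⁻¹' {x} := by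
  ext i
  have hlim : Tendsto (codingApprox f i) atTop (𝓝 (codedPoint l d i)) := by
    simpa only [← codingApprox_eq_sum hf, codedPoint] using
      (summable_pow_mul_digit hl d i).hasSum.tendsto_sum_nat
  exact ⟨fun hi => tendsto_nhds_unique hlim hi,
    fun hi => (show codedPoint l d i = x from hi) ▸ hlim⟩

end Affine

/-! ### The system with one exact overlap -/

section Overlap

variable {l : ℝ}

/-- The translation parts of the four maps `x ↦ l * x + overlapDigit l a`. -/
def overlapDigit (l : ℝ) : Fin 4 → ℝ := ![0, 2 * l, 3 * l - l ^ 2, 1 - l]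

theorem five_mul_sub_sq_lt_one (hl : l < (5 - √21) / 2) : 5 * l - l ^ 2 < 1 := by
  have hsqrt : √21 < 5 - 2 * l := by linarith
  linarith [Real.lt_sq_of_sqrt_lt hsqrt]

theorem lt_one_fourth_of_lt (hl : l < (5 - √21) / 2) : l < 1 / 4 := by
  have hsqrt : 4.5 < √21 := Real.lt_sqrt_of_sq_lt (by norm_num)
  linarith

theorem overlapDigit_mem_Icc (hl₀ : 0 ≤ l) (hl₁ : l ≤ 1 / 4) :
    ∀ a, overlapDigit l a ∈ Icc 0 (1 - l)
  | 0 => show 0 ∈ Icc 0 (1 - l) from ⟨le_rfl, by linarith⟩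
  | 1 => show 2 * l ∈ Icc 0 (1 - l) from ⟨by linarith, by linarith⟩
  | 2 => show 3 * l - l ^ 2 ∈ Icc 0 (1 - l) from ⟨by nlinarith, by nlinarith⟩
  | 3 => show 1 - l ∈ Icc 0 (1 - l) from ⟨by linarith, le_rfl⟩

theorem codingCount_overlapDigit_of_le (hl₀ : 0 < l) (hl₁ : l < 1 / 4) {x : ℝ} (hx : x ≤ l) :
    codingCount l (overlapDigit l) x = codingCount l (overlapDigit l) (x / l) := by
  have hpieces : ∀ b ≠ 0, x ∉ Icc (overlapDigit l b) (overlapDigit l b + l)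
    | 0, hb, _ => hb rfl
    | 1, _, (h : x ∈ Icc (2 * l) (2 * l + l)) => by linarith [h.1]
    | 2, _, (h : x ∈ Icc (3 * l - l ^ 2) (3 * l - l ^ 2 + l)) => by nlinarith [h.1]
    | 3, _, (h : x ∈ Icc (1 - l) (1 - l + l)) => by linarith [h.1]
  simpa [overlapDigit] using codingCount_eq_of_forall_ne hl₀ (by linarith)
    (overlapDigit_mem_Icc hl₀.le hl₁.le) 0 hpieces

theorem codingCount_overlapDigit_of_ge (hl₀ : 0 < l) (hl₁ : l < 1 / 4) (hsep : 5 * l - l ^ 2 < 1)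
    {x : ℝ} (hx : 1 - l ≤ x) :
    codingCount l (overlapDigit l) x = codingCount l (overlapDigit l) ((x - (1 - l)) / l) := by
  have hpieces : ∀ b ≠ 3, x ∉ Icc (overlapDigit l b) (overlapDigit l b + l)
    | 0, _, (h : x ∈ Icc 0 (0 + l)) => by linarith [h.2]
    | 1, _, (h : x ∈ Icc (2 * l) (2 * l + l)) => by linarith [h.2]
    | 2, _, (h : x ∈ Icc (3 * l - l ^ 2) (3 * l - l ^ 2 + l)) => by linarith [h.2]
    | 3, hb, _ => hb rfl
  exact codingCount_eq_of_forall_ne hl₀ (by linarith)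
    (overlapDigit_mem_Icc hl₀.le hl₁.le) 3 hpieces

theorem codingCount_overlapDigit_of_mem_Ioo (hl₀ : 0 < l) (hl₁ : l < 1 / 4)
    {x : ℝ} (hx : x ∈ Ioo l (1 - l)) :
    codingCount l (overlapDigit l) x = codingCount l (overlapDigit l) ((x - 2 * l) / l) +
      codingCount l (overlapDigit l) ((x - (3 * l - l ^ 2)) / l) := by
  have hd := overlapDigit_mem_Icc hl₀.le hl₁.le
  have hfirst : x ∉ Icc (overlapDigit l 0) (overlapDigit l 0 + l) :=
    fun (h : x ∈ Icc 0 (0 + l)) => by linarith [hx.1, h.2]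
  have hlast : x ∉ Icc (overlapDigit l 3) (overlapDigit l 3 + l) :=
    fun h => hx.2.not_ge h.1
  rw [codingCount_eq_sum (abs_lt.2 ⟨by linarith, by linarith⟩) hl₀.ne', Fin.sum_univ_four,
    codingCount_div_eq_zero hl₀ (by linarith) hd hfirst,
    codingCount_div_eq_zero hl₀ (by linarith) hd hlast, zero_add, add_zero]
  rfl

-- Both sides count the codings of `z = (y - (1 - l)) / l`: as `f_2 f_4 z = f_3 f_1 z`, the points
-- `f_4 z = y` and `f_1 z = y - (1 - l)` are the two tails left by the overlap.
theorem codingCount_overlapDigit_sub_eq (hl₀ : 0 < l) (hl₁ : l < 1 / 4)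
    (hsep : 5 * l - l ^ 2 < 1) {y : ℝ} (hy : y ∈ Icc (1 - l) 1) :
    codingCount l (overlapDigit l) (y - (1 - l)) = codingCount l (overlapDigit l) y := by
  rw [codingCount_overlapDigit_of_ge hl₀ hl₁ hsep hy.1,
    codingCount_overlapDigit_of_le hl₀ hl₁ (by linarith [hy.2])]

theorem exists_codingCount_mul_add_digit_one_eq (hl₀ : 0 < l) (hl₁ : l < 1 / 4)
    (hsep : 5 * l - l ^ 2 < 1) {y : ℝ} (hy : y ∈ Icc 0 1) :
    ∃ e : ℕ, codingCount l (overlapDigit l) (l * y + 2 * l) =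
      2 ^ e * codingCount l (overlapDigit l) y := by
  have hsplit := codingCount_overlapDigit_of_mem_Ioo hl₀ hl₁
    (x := l * y + 2 * l) ⟨by nlinarith [hy.1], by nlinarith [hy.2]⟩
  rw [show (l * y + 2 * l - 2 * l) / l = y by field_simp; ring,
    show (l * y + 2 * l - (3 * l - l ^ 2)) / l = y - (1 - l) by field_simp; ring] at hsplit
  rcases lt_or_ge y (1 - l) with hlt | hge
  · refine ⟨0, ?_⟩
    have hout : y - (1 - l) ∉ Icc 0 1 := fun h => by linarith [h.1]
    rw [hsplit, codingCount_eq_zero hl₀.le (by linarith) (overlapDigit_mem_Icc hl₀.le hl₁.le) hout,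
      add_zero, pow_zero, one_mul]
  · refine ⟨1, ?_⟩
    rw [hsplit, codingCount_overlapDigit_sub_eq hl₀ hl₁ hsep ⟨hge, hy.2⟩, pow_one, two_mul]

theorem exists_codingCount_mul_add_digit_two_eq (hl₀ : 0 < l) (hl₁ : l < 1 / 4)
    (hsep : 5 * l - l ^ 2 < 1) {y : ℝ} (hy : y ∈ Icc 0 1) :
    ∃ e : ℕ, codingCount l (overlapDigit l) (l * y + (3 * l - l ^ 2)) =
      2 ^ e * codingCount l (overlapDigit l) y := by
  have hsplit := codingCount_overlapDigit_of_mem_Ioo hl₀ hl₁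
    (x := l * y + (3 * l - l ^ 2)) ⟨by nlinarith [hy.1], by nlinarith [hy.2]⟩
  rw [show (l * y + (3 * l - l ^ 2) - 2 * l) / l = y + (1 - l) by field_simp; ring,
    show (l * y + (3 * l - l ^ 2) - (3 * l - l ^ 2)) / l = y by field_simp; ring] at hsplit
  rcases lt_or_ge l y with hlt | hge
  · refine ⟨0, ?_⟩
    have hout : y + (1 - l) ∉ Icc 0 1 := fun h => by linarith [h.2]
    rw [hsplit, codingCount_eq_zero hl₀.le (by linarith) (overlapDigit_mem_Icc hl₀.le hl₁.le) hout,
      zero_add, pow_zero, one_mul]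
  · refine ⟨1, ?_⟩
    have hswap := codingCount_overlapDigit_sub_eq hl₀ hl₁ hsep
      (y := y + (1 - l)) ⟨by linarith [hy.1], by linarith⟩
    rw [hsplit, ← hswap, add_sub_cancel_right, pow_one, two_mul]

theorem exists_codingCount_mul_add_overlapDigit_eq (hl₀ : 0 < l) (hl₁ : l < 1 / 4)
    (hsep : 5 * l - l ^ 2 < 1) {y : ℝ} (hy : y ∈ Icc 0 1) (a : Fin 4) :
    ∃ e : ℕ, codingCount l (overlapDigit l) (l * y + overlapDigit l a) =
      2 ^ e * codingCount l (overlapDigit l) y := by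
  fin_cases a
  · refine ⟨0, ?_⟩
    have h := codingCount_overlapDigit_of_le hl₀ hl₁ (mul_le_of_le_one_right hl₀.le hy.2)
    simpa [overlapDigit, mul_div_cancel_left₀ y hl₀.ne'] using h
  · exact exists_codingCount_mul_add_digit_one_eq hl₀ hl₁ hsep hy
  · exact exists_codingCount_mul_add_digit_two_eq hl₀ hl₁ hsep hy
  · refine ⟨0, ?_⟩
    have h := codingCount_overlapDigit_of_ge hl₀ hl₁ hsep
      (le_add_of_nonneg_left (mul_nonneg hl₀.le hy.1))
    simpa [overlapDigit, mul_div_cancel_left₀ y hl₀.ne'] using h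

theorem encard_preimage_codedPoint_eq_two_pow_or_not_countable (hl₀ : 0 < l) (hl₁ : l < 1 / 4)
    (hsep : 5 * l - l ^ 2 < 1) {x : ℝ} (hx : x ∈ range (codedPoint l (overlapDigit l))) :
    (∃ k : ℕ, (codedPoint l (overlapDigit l) ⁻¹' {x}).encard = 2 ^ k) ∨
      ¬ (codedPoint l (overlapDigit l) ⁻¹' {x}).Countable := by
  have hl : |l| < 1 := abs_lt.2 ⟨by linarith, by linarith⟩
  refine encard_fiber_eq_pow_or_not_countable (continuous_codedPoint hl _)
    (fun a i j hij => ?_) (fun i => ?_) hx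
  · rw [codedPoint_seqCons hl, codedPoint_seqCons hl, hij]
  · have hmem := codedPoint_mem_Icc hl₀.le (by linarith) (overlapDigit_mem_Icc hl₀.le hl₁.le)
      (seqTail i)
    have hstep := exists_codingCount_mul_add_overlapDigit_eq hl₀ hl₁ hsep hmem (i 0)
    rwa [← codedPoint_seqCons hl, seqCons_head_seqTail] at hstep

end Overlap

end CodingCount

open CodingCount

/-- every `x ∈ K` has exactly `2^k` codings for some `k ≥ 0`,
or uncountably many codings. -/
theorem statement3
    (lam : ℝ) (hlam : 0 < lam ∧ lam < (5 - Real.sqrt 21) / 2)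
    (f : Fin 4 → ℝ → ℝ)
    (hf : f = ![fun x => lam * x, fun x => lam * x + 2 * lam,
      fun x => lam * x + 3 * lam - lam ^ 2, fun x => lam * x + 1 - lam])
    (K : Set ℝ) (hKne : K.Nonempty) (hKcpt : IsCompact K)
    (hK : K = f 0 '' K ∪ f 1 '' K ∪ f 2 '' K ∪ f 3 '' K)
    (U : ℕ → Set ℝ)
    (hU : ∀ k : ℕ, U k = {x ∈ K | (codings f x).encard = (k : ℕ∞)})
    (x : ℝ) (hx : x ∈ K) :
    (∃ k : ℕ, (codings f x).encard = ((2 ^ k : ℕ) : ℕ∞)) ∨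
      ¬ (codings f x).Countable := by
  obtain ⟨hl₀, hl⟩ := hlam
  have hl₁ := lt_one_fourth_of_lt hl
  have habs : |lam| < 1 := abs_lt.2 ⟨by linarith, by linarith⟩
  have hf_affine (a : Fin 4) (y : ℝ) : f a y = lam * y + overlapDigit lam a := by
    subst hf
    fin_cases a <;> simp [overlapDigit, add_sub_assoc]
  have hK_subset : K ⊆ ⋃ a, (fun y => lam * y + overlapDigit lam a) '' K := by
    simp only [← hf_affine]
    refine hK.subset.trans ?_
    simp only [Set.union_subset_iff, and_assoc]
    exact ⟨Set.subset_iUnion (fun a => f a '' K) 0, Set.subset_iUnion (fun a => f a '' K) 1,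
      Set.subset_iUnion (fun a => f a '' K) 2, Set.subset_iUnion (fun a => f a '' K) 3⟩
  have hcoded := mem_range_codedPoint_of_subset_iUnion habs hKcpt.isBounded hK_subset hx
  rw [codings_eq_preimage_codedPoint hf_affine habs]
  exact_mod_cast encard_preimage_codedPoint_eq_two_pow_or_not_countable hl₀ hl₁
    (five_mul_sub_sq_lt_one hl) hcoded
end

section
/- The set of unique expansions Ũ_β is a subshift of finite type if and only if the quasi-greedy orbit of 1 falls into the interval (1/β, 1/(β(β−1))], i.e. there exists n ≥ 1 such that Q^n(1) ∈ (1/β, 1/(β(β−1))]. -/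
/-- The value `Σ_{n≥1} a_n β^{-n}` of a digit sequence (indexed from 0, so `a i = a_{i+1}`). -/
noncomputable def betaVal (β : ℝ) (a : ℕ → ℕ) : ℝ := ∑' n : ℕ, (a n : ℝ) / β ^ (n + 1)

/-- `Ũ_β`: the set of 0-1 sequences that are the unique β-expansion of their value. -/
def UTilde (β : ℝ) : Set (ℕ → ℕ) :=
  {a | (∀ n, a n ≤ 1) ∧
    ∀ b : ℕ → ℕ, (∀ n, b n ≤ 1) → betaVal β b = betaVal β a → b = a}

/-- The word `w` occurs in the sequence `x` starting at position `n`. -/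
def OccursAt (w : List ℕ) (x : ℕ → ℕ) (n : ℕ) : Prop :=
  ∀ i : Fin w.length, x (n + i.1) = w.get i

/-- `Y` is a subshift of finite type inside the ambient full shift `{0,1}^ℕ`: there is a
finite set `F` of forbidden words such that `Y` consists exactly of the 0-1 sequences in
which no word of `F` occurs. -/
def IsSFT01 (Y : Set (ℕ → ℕ)) : Prop :=
  ∃ F : Set (List ℕ), F.Finite ∧
    Y = {x | (∀ n, x n ≤ 1) ∧ ∀ w ∈ F, ∀ n, ¬ OccursAt w x n}

/-- Strict lexicographic order on sequences. -/
def LexLt (a b : ℕ → ℕ) : Prop :=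
  ∃ n, (∀ k < n, a k = b k) ∧ a n < b n

/-- `η` is the quasi-greedy expansion of `1` in base `β`: the lexicographically largest
0-1 sequence with infinitely many digits `1` whose value is `1`. -/
def QuasiGreedy (β : ℝ) (η : ℕ → ℕ) : Prop :=
  (∀ n, η n ≤ 1) ∧ (∀ N, ∃ n ≥ N, η n = 1) ∧ betaVal β η = 1 ∧
    ∀ ζ : ℕ → ℕ, (∀ n, ζ n ≤ 1) → (∀ N, ∃ n ≥ N, ζ n = 1) →
      betaVal β ζ = 1 → ζ ≠ η → LexLt ζ η

/-!
For a 0-1 sequence `a`, reflection (exchanging the two digits) turns the value `x` into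
`1/(β-1) - x`. A digit `0` of `a` can be raised, at the price of changing the later digits,
exactly when the tail behind it has value at least `1`; hence `a` is a unique expansion iff in `a`
and in its reflection all tails behind a digit `0` have value less than `1`. The orbit of `1`
meets `(1/β, 1/(β(β-1))]` iff the reflection of `η` violates this tail condition.

If the violation occurs at position `n`, no tail behind a `0` of a unique expansion can begin with
`η₀ ⋯ ηₙ`. So such a tail drops lexicographically below `η` within its first `n + 1` digits, and
this finite-window condition conversely characterises unique expansions.

If there is no violation, `Ũ_β` is not even closed: among the unique expansions of numbers below `1`
none has the largest value. If such an `a` first differs from `η` at position `j`, then the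
sequence that alternates `η₀ ⋯ ηⱼ` and its reflection is again a unique expansion of a number
below `1`, and its value is larger.
-/

open Set

namespace BetaExpansion

variable {β : ℝ} {a b d η : ℕ → ℕ} {m n : ℕ}

/-! ### Digit sequences -/

/-- `a` is a sequence of digits `0` and `1`. -/
def IsBinary (a : ℕ → ℕ) : Prop := ∀ n, a n ≤ 1

/-- The tail of `a` starting at position `n`. -/
def shift (n : ℕ) (a : ℕ → ℕ) : ℕ → ℕ := fun k => a (n + k)

/-- The digitwise reflection `0 ↔ 1`; the truncated subtraction makes every digit above `1`
count as `1`. -/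
def reflection (a : ℕ → ℕ) : ℕ → ℕ := fun k => 1 - a k

/-- The first `n` digits of `a` followed by the sequence `b`. -/
def splice (a : ℕ → ℕ) (n : ℕ) (b : ℕ → ℕ) : ℕ → ℕ :=
  fun k => if k < n then a k else b (k - n)

theorem IsBinary.shift (ha : IsBinary a) (n : ℕ) : IsBinary (shift n a) := fun k => ha (n + k)

theorem isBinary_reflection (a : ℕ → ℕ) : IsBinary (reflection a) := fun _ => Nat.sub_le _ _

theorem IsBinary.splice (ha : IsBinary a) (hb : IsBinary b) (n : ℕ) : IsBinary (splice a n b) := by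
  intro k
  unfold BetaExpansion.splice
  split_ifs
  exacts [ha k, hb _]

theorem shift_zero (a : ℕ → ℕ) : shift 0 a = a := by
  funext k
  simp [shift]

theorem shift_shift (m n : ℕ) (a : ℕ → ℕ) : shift m (shift n a) = shift (n + m) a := by
  funext k
  simp [shift, add_assoc]

theorem shift_reflection (n : ℕ) (a : ℕ → ℕ) :
    shift n (reflection a) = reflection (shift n a) := rfl

theorem reflection_reflection (ha : IsBinary a) : reflection (reflection a) = a := by
  funext k
  have := ha k
  simp only [reflection]
  omega

theorem reflection_eq_zero_iff (ha : IsBinary a) : reflection a n = 0 ↔ a n = 1 := by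
  have := ha n
  simp only [reflection]
  omega

theorem splice_of_lt (a b : ℕ → ℕ) {k : ℕ} (hk : k < n) : splice a n b k = a k := if_pos hk

theorem shift_splice (a : ℕ → ℕ) (n : ℕ) (b : ℕ → ℕ) : shift n (splice a n b) = b := by
  funext k
  simp [shift, splice]

theorem _root_.LexLt.asymm (hab : LexLt a b) : ¬ LexLt b a := by
  rintro ⟨j, hba, hj⟩
  obtain ⟨i, hab, hi⟩ := hab
  rcases lt_trichotomy i j with h | rfl | h
  · exact hi.ne' (hba i h)
  · exact hi.not_gt hj
  · exact hj.ne' (hab j h)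

theorem lexLt_or_lexLt_of_ne (h : a ≠ b) : LexLt a b ∨ LexLt b a := by
  classical
  have hne : ∃ n, a n ≠ b n := Function.ne_iff.mp h
  have heq : ∀ k < Nat.find hne, a k = b k := fun k hk => not_not.mp (Nat.find_min hne hk)
  exact (Nat.find_spec hne).lt_or_gt.imp (fun hlt => ⟨_, heq, hlt⟩)
    fun hgt => ⟨_, fun k hk => (heq k hk).symm, hgt⟩

theorem _root_.LexLt.reflection (ha : IsBinary a) (hab : LexLt b a) :
    LexLt (reflection a) (reflection b) := by
  obtain ⟨n, heq, hlt⟩ := hab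
  refine ⟨n, fun k hk => by simp only [BetaExpansion.reflection, heq k hk], ?_⟩
  have := ha n
  simp only [BetaExpansion.reflection]
  omega

/-! ### Values of expansions -/

theorem hasSum_one_div_pow_succ (hβ : 1 < β) :
    HasSum (fun n : ℕ => 1 / β ^ (n + 1)) (1 / (β - 1)) := by
  have hβ0 : 0 < β := by linarith
  have hgeom := (hasSum_geometric_of_lt_one (inv_nonneg.mpr hβ0.le)
    (inv_lt_one_of_one_lt₀ hβ)).mul_left β⁻¹
  have hterm (n : ℕ) : 1 / β ^ (n + 1) = β⁻¹ * β⁻¹ ^ n := by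
    rw [← pow_succ', inv_pow, one_div]
  have hsum : 1 / (β - 1) = β⁻¹ * (1 - β⁻¹)⁻¹ := by
    rw [← mul_inv, mul_sub, mul_inv_cancel₀ hβ0.ne', mul_one, one_div]
  simpa only [hterm, hsum] using hgeom

theorem digit_div_le (hβ : 0 ≤ β) (ha : IsBinary a) (n : ℕ) :
    (a n : ℝ) / β ^ (n + 1) ≤ 1 / β ^ (n + 1) := by
  have : (a n : ℝ) ≤ 1 := mod_cast ha n
  gcongr

theorem summable_digit_div (hβ : 1 < β) (ha : IsBinary a) :
    Summable fun n : ℕ => (a n : ℝ) / β ^ (n + 1) :=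
  .of_nonneg_of_le (fun n => by positivity) (digit_div_le (by linarith) ha)
    (hasSum_one_div_pow_succ hβ).summable

theorem betaVal_nonneg (hβ : 0 ≤ β) (a : ℕ → ℕ) : 0 ≤ betaVal β a :=
  tsum_nonneg fun n => by positivity

theorem betaVal_le (hβ : 1 < β) (ha : IsBinary a) : betaVal β a ≤ 1 / (β - 1) := by
  rw [← (hasSum_one_div_pow_succ hβ).tsum_eq]
  exact (summable_digit_div hβ ha).tsum_le_tsum (digit_div_le (by linarith) ha)
    (hasSum_one_div_pow_succ hβ).summable

theorem betaVal_zero (β : ℝ) : betaVal β 0 = 0 := by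
  simp [betaVal]

theorem betaVal_reflection (hβ : 1 < β) (ha : IsBinary a) :
    betaVal β (reflection a) = 1 / (β - 1) - betaVal β a := by
  refine Eq.trans (tsum_congr fun n => ?_)
    ((hasSum_one_div_pow_succ hβ).sub (summable_digit_div hβ ha).hasSum).tsum_eq
  simp only [reflection]
  rw [Nat.cast_sub (ha n), Nat.cast_one, sub_div]

theorem mul_betaVal (hβ : 1 < β) (ha : IsBinary a) :
    β * betaVal β a = a 0 + betaVal β (shift 1 a) := by
  have hβ0 : 0 < β := by linarith
  unfold betaVal
  rw [(summable_digit_div hβ ha).tsum_eq_zero_add, mul_add, ← tsum_mul_left]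
  congr 1
  · rw [zero_add, pow_one, mul_div_cancel₀ _ hβ0.ne']
  · refine tsum_congr fun n => ?_
    rw [shift, add_comm 1 n, pow_succ β (n + 1)]
    field_simp

theorem mul_betaVal_shift (hβ : 1 < β) (ha : IsBinary a) (n : ℕ) :
    β * betaVal β (shift n a) = a n + betaVal β (shift (n + 1) a) := by
  rw [mul_betaVal hβ (ha.shift n), shift_shift]
  rfl

theorem pow_mul_betaVal_sub (hβ : 1 < β) (ha : IsBinary a) (hb : IsBinary b)
    (h : ∀ k < n, a k = b k) :
    β ^ n * (betaVal β b - betaVal β a) = betaVal β (shift n b) - betaVal β (shift n a) := by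
  induction n with
  | zero => simp [shift_zero]
  | succ n ih =>
    have ih := ih fun k hk => h k (by omega)
    have hdigit : (a n : ℝ) = b n := by rw [h n n.lt_succ_self]
    linear_combination β * ih + mul_betaVal_shift hβ hb n - mul_betaVal_shift hβ ha n - hdigit

theorem betaVal_shift_lt_iff (hβ : 1 < β) (ha : IsBinary a) (hb : IsBinary b)
    (h : ∀ k < n, a k = b k) :
    betaVal β (shift n a) < betaVal β (shift n b) ↔ betaVal β a < betaVal β b := by
  have hpow : 0 < β ^ n := by positivity
  rw [← sub_pos, ← pow_mul_betaVal_sub hβ ha hb h, mul_pos_iff_of_pos_left hpow, sub_pos]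

theorem pow_succ_mul_betaVal_sub (hβ : 1 < β) (ha : IsBinary a) (hb : IsBinary b)
    (h : ∀ k < n, a k = b k) (han : a n = 0) (hbn : b n = 1) :
    β ^ (n + 1) * (betaVal β b - betaVal β a) =
      1 + betaVal β (shift (n + 1) b) - betaVal β (shift (n + 1) a) := by
  have hstep_a := mul_betaVal_shift hβ ha n
  have hstep_b := mul_betaVal_shift hβ hb n
  rw [han, Nat.cast_zero] at hstep_a
  rw [hbn, Nat.cast_one] at hstep_b
  linear_combination β * pow_mul_betaVal_sub hβ ha hb h + hstep_b - hstep_a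

theorem betaVal_lt_of_shift_lt (hβ : 1 < β) (ha : IsBinary a) (hb : IsBinary b)
    (h : ∀ k < n, a k = b k) (han : a n = 0) (hbn : b n = 1)
    (hlt : betaVal β (shift (n + 1) a) < 1 + betaVal β (shift (n + 1) b)) :
    betaVal β a < betaVal β b := by
  have hpow : 0 < β ^ (n + 1) := by positivity
  rwa [← sub_pos, ← mul_pos_iff_of_pos_left hpow, pow_succ_mul_betaVal_sub hβ ha hb h han hbn,
    sub_pos]

theorem betaVal_le_of_shift_le (hβ : 1 < β) (ha : IsBinary a) (hb : IsBinary b)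
    (h : ∀ k < n, a k = b k) (han : a n = 0) (hbn : b n = 1)
    (hle : betaVal β (shift (n + 1) a) ≤ 1 + betaVal β (shift (n + 1) b)) :
    betaVal β a ≤ betaVal β b := by
  have hpow : 0 < β ^ (n + 1) := by positivity
  rwa [← sub_nonneg, ← mul_nonneg_iff_of_pos_left hpow,
    pow_succ_mul_betaVal_sub hβ ha hb h han hbn, sub_nonneg]

theorem betaVal_shift_pos_iff (hβ : 1 < β) (ha : IsBinary a) :
    0 < betaVal β (shift n a) ↔ ∃ k ≥ n, a k = 1 := by
  constructor
  · intro hpos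
    by_contra! hne
    have hzero : shift n a = 0 := by
      funext k
      have := ha (n + k)
      have := hne (n + k) (by omega)
      simp only [shift, Pi.zero_apply]
      omega
    rw [hzero, betaVal_zero] at hpos
    exact hpos.false
  · rintro ⟨k, hk, hak⟩
    refine (summable_digit_div hβ (ha.shift n)).tsum_pos (fun i => by positivity) (k - n) ?_
    rw [shift, Nat.add_sub_cancel' hk, hak]
    positivity

/-! ### Existence of expansions -/

theorem nonpos_of_forall_exists_mul_le {ι : Type*} {e : ι → ℝ} (hβ : 1 < β)
    (hbdd : BddAbove (range e)) (h : ∀ i, 0 < e i → ∃ j, β * e i ≤ e j) (i : ι) : e i ≤ 0 := by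
  by_contra! hi
  have : Nonempty ι := ⟨i⟩
  have hsup : 0 < ⨆ k, e k := hi.trans_le (le_ciSup hbdd i)
  have hle : ⨆ k, e k ≤ (⨆ k, e k) / β := ciSup_le fun k => by
    rcases le_or_gt (e k) 0 with hk | hk
    · exact hk.trans (by positivity)
    · obtain ⟨j, hj⟩ := h k hk
      rw [le_div_iff₀' (by linarith)]
      exact hj.trans (le_ciSup hbdd j)
  exact hle.not_gt (div_lt_self hsup hβ)

theorem betaVal_shift_eq_of_orbit (hβ : 1 < β) (hd : IsBinary d) {y : ℕ → ℝ} {C : ℝ}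
    (hy : ∀ n, y (n + 1) = β * y n - d n) (hC : ∀ n, |y n| ≤ C) (n : ℕ) :
    betaVal β (shift n d) = y n := by
  have hgrow (k : ℕ) : β * |betaVal β (shift k d) - y k| =
      |betaVal β (shift (k + 1) d) - y (k + 1)| := by
    have hstep : betaVal β (shift (k + 1) d) - y (k + 1) = β * (betaVal β (shift k d) - y k) := by
      linear_combination -mul_betaVal_shift hβ hd k - hy k
    rw [hstep, abs_mul, abs_of_pos (zero_lt_one.trans hβ)]
  have hbdd : BddAbove (range fun k => |betaVal β (shift k d) - y k|) := by
    refine ⟨1 / (β - 1) + C, ?_⟩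
    rintro _ ⟨k, rfl⟩
    refine (abs_sub _ _).trans (add_le_add ?_ (hC k))
    rw [abs_of_nonneg (betaVal_nonneg (by linarith) _)]
    exact betaVal_le hβ (hd.shift k)
  have hnonpos := nonpos_of_forall_exists_mul_le hβ hbdd (fun k _ => ⟨k + 1, (hgrow k).le⟩) n
  exact sub_eq_zero.mp (abs_nonpos_iff.mp hnonpos)

/-- The first digit of the quasi-greedy expansion of `y`: the digit `1` is chosen whenever this
leaves a positive remainder. -/
noncomputable def quasiGreedyDigit (β y : ℝ) : ℕ := if 1 < β * y then 1 else 0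

/-- The quasi-greedy map, which removes the first quasi-greedy digit of `y`. -/
noncomputable def quasiGreedyMap (β y : ℝ) : ℝ := β * y - quasiGreedyDigit β y

theorem quasiGreedyMap_mem_Ioc (hβ : β ∈ Ioo 1 2) {y : ℝ} (hy : y ∈ Ioc 0 (1 / (β - 1))) :
    quasiGreedyMap β y ∈ Ioc 0 (1 / (β - 1)) := by
  obtain ⟨hβ1, hβ2⟩ := hβ
  have hβ' : 0 < β - 1 := by linarith
  have hβy : 0 < β * y := mul_pos (by linarith) hy.1
  have hle : (β - 1) * y ≤ 1 := (le_div_iff₀' hβ').mp hy.2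
  have hone : 1 ≤ 1 / (β - 1) := by
    rw [le_div_iff₀ hβ']
    linarith
  unfold quasiGreedyMap quasiGreedyDigit
  split_ifs with h
  · push_cast
    exact ⟨by linarith, by linarith [hy.2]⟩
  · push_cast
    exact ⟨by linarith, by linarith⟩

theorem exists_betaVal_eq_infinite (hβ : β ∈ Ioo 1 2) {y : ℝ} (hy : y ∈ Ioc 0 (1 / (β - 1))) :
    ∃ d, IsBinary d ∧ betaVal β d = y ∧ ∀ N, ∃ n ≥ N, d n = 1 := by
  let orbit (n : ℕ) : ℝ := (quasiGreedyMap β)^[n] y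
  let d (n : ℕ) : ℕ := quasiGreedyDigit β (orbit n)
  have hd : IsBinary d := fun n => by
    simp only [d, quasiGreedyDigit]
    split_ifs <;> simp
  have horbit (n : ℕ) : orbit n ∈ Ioc 0 (1 / (β - 1)) :=
    (show MapsTo (quasiGreedyMap β) (Ioc 0 (1 / (β - 1))) (Ioc 0 (1 / (β - 1))) from
      fun _ => quasiGreedyMap_mem_Ioc hβ).iterate n hy
  have hval := betaVal_shift_eq_of_orbit hβ.1 hd (y := orbit) (C := 1 / (β - 1))
    (fun n => Function.iterate_succ_apply' (quasiGreedyMap β) n y)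
    (fun n => (abs_of_pos (horbit n).1).trans_le (horbit n).2)
  refine ⟨d, hd, ?_, fun N => (betaVal_shift_pos_iff hβ.1 hd).mp ?_⟩
  · rw [← shift_zero d, hval 0]
    rfl
  · rw [hval N]
    exact (horbit N).1

theorem exists_betaVal_eq (hβ : β ∈ Ioo 1 2) {y : ℝ} (hy : y ∈ Icc 0 (1 / (β - 1))) :
    ∃ d, IsBinary d ∧ betaVal β d = y := by
  rcases hy.1.eq_or_lt with rfl | hpos
  · exact ⟨0, fun _ => zero_le_one, betaVal_zero β⟩
  · obtain ⟨d, hd, hval, -⟩ := exists_betaVal_eq_infinite hβ ⟨hpos, hy.2⟩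
    exact ⟨d, hd, hval⟩

theorem exists_lexLt_of_digit_eq_zero (hβ : 1 < β) (ha : IsBinary a) (hd : IsBinary d)
    (han : a n = 0) (hval : betaVal β d = betaVal β (shift (n + 1) a) - 1) :
    ∃ b, IsBinary b ∧ LexLt a b ∧ betaVal β b = betaVal β a ∧ shift (n + 1) b = d := by
  let b := splice (Function.update a n 1) (n + 1) d
  have hb_lt : ∀ k < n, a k = b k := fun k hk => by
    simp only [b]
    rw [splice_of_lt _ _ (by omega), Function.update_of_ne hk.ne]
  have hbn : b n = 1 := by
    simp only [b]
    rw [splice_of_lt _ _ n.lt_succ_self, Function.update_self]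
  have hb : IsBinary b := by
    refine IsBinary.splice (fun k => ?_) hd (n + 1)
    rcases eq_or_ne k n with rfl | hk
    · rw [Function.update_self]
    · rw [Function.update_of_ne hk]
      exact ha k
  have htail : shift (n + 1) b = d := shift_splice _ _ _
  refine ⟨b, hb, ⟨n, hb_lt, by omega⟩, ?_, htail⟩
  have hdiff := pow_succ_mul_betaVal_sub hβ ha hb hb_lt han hbn
  rw [htail, hval, add_sub_cancel, sub_self] at hdiff
  exact sub_eq_zero.mp ((mul_eq_zero_iff_left (by positivity)).mp hdiff)

/-! ### Unique expansions -/

/-- Every tail of `a` behind a digit `0` has value less than `1`, so that no digit `0` of `a` can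
be replaced by `1` without changing an earlier digit or the value. This is one half of the
characterisation of unique expansions; the other half is the same condition on `reflection a`. -/
def TailsAfterZeroLtOne (β : ℝ) (a : ℕ → ℕ) : Prop :=
  ∀ n, a n = 0 → betaVal β (shift (n + 1) a) < 1

theorem tailsAfterZeroLtOne_iff_shift_one :
    TailsAfterZeroLtOne β a ↔
      (a 0 = 0 → betaVal β (shift 1 a) < 1) ∧ TailsAfterZeroLtOne β (shift 1 a) := by
  unfold TailsAfterZeroLtOne
  rw [← Nat.and_forall_add_one]
  simp only [shift_shift, shift, zero_add, add_comm 1]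

theorem TailsAfterZeroLtOne.betaVal_lt_of_lexLt (h : TailsAfterZeroLtOne β a) (hβ : 1 < β)
    (ha : IsBinary a) (hb : IsBinary b) (hab : LexLt a b) : betaVal β a < betaVal β b := by
  obtain ⟨n, heq, hlt⟩ := hab
  have := hb n
  have han : a n = 0 := by omega
  refine betaVal_lt_of_shift_lt hβ ha hb heq han (by omega) ?_
  linarith [h n han, betaVal_nonneg (by linarith : 0 ≤ β) (shift (n + 1) b)]

theorem reflection_mem_UTilde (hβ : 1 < β) (ha : a ∈ UTilde β) : reflection a ∈ UTilde β := by
  refine ⟨isBinary_reflection a, fun b hb hval => ?_⟩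
  have hval' : betaVal β (reflection b) = betaVal β a := by
    rw [betaVal_reflection hβ hb, hval, betaVal_reflection hβ ha.1, sub_sub_cancel]
  rw [← ha.2 _ (isBinary_reflection b) hval', reflection_reflection hb]

theorem tailsAfterZeroLtOne_of_mem_UTilde (hβ : β ∈ Ioo 1 2) (ha : a ∈ UTilde β) :
    TailsAfterZeroLtOne β a := by
  intro n han
  by_contra! hge
  have hle := betaVal_le hβ.1 (IsBinary.shift ha.1 (n + 1))
  obtain ⟨d, hd, hdval⟩ := exists_betaVal_eq hβ
    (y := betaVal β (shift (n + 1) a) - 1) ⟨by linarith, by linarith⟩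
  obtain ⟨b, hb, hab, hbval, -⟩ := exists_lexLt_of_digit_eq_zero hβ.1 ha.1 hd han hdval
  rw [ha.2 b hb hbval] at hab
  exact hab.asymm hab

theorem mem_UTilde_iff (hβ : β ∈ Ioo 1 2) :
    a ∈ UTilde β ↔
      IsBinary a ∧ TailsAfterZeroLtOne β a ∧ TailsAfterZeroLtOne β (reflection a) := by
  constructor
  · exact fun ha => ⟨ha.1, tailsAfterZeroLtOne_of_mem_UTilde hβ ha,
      tailsAfterZeroLtOne_of_mem_UTilde hβ (reflection_mem_UTilde hβ.1 ha)⟩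
  · rintro ⟨ha, htails, htails_refl⟩
    refine ⟨ha, fun b hb hval => ?_⟩
    by_contra hne
    rcases lexLt_or_lexLt_of_ne hne with hlt | hlt
    · refine (htails_refl.betaVal_lt_of_lexLt hβ.1 (isBinary_reflection a) (isBinary_reflection b)
        (hlt.reflection ha)).ne ?_
      rw [betaVal_reflection hβ.1 ha, betaVal_reflection hβ.1 hb, hval]
    · exact (htails.betaVal_lt_of_lexLt hβ.1 ha hb hlt).ne hval.symm

theorem splice_zero_mem_UTilde_iff (hβ : β ∈ Ioo 1 2) :
    splice 0 1 a ∈ UTilde β ↔ a ∈ UTilde β ∧ betaVal β a < 1 := by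
  have hbinary : IsBinary (splice 0 1 a) ↔ IsBinary a :=
    ⟨fun h => shift_splice 0 1 a ▸ h.shift 1, fun h => IsBinary.splice (fun _ => zero_le_one) h 1⟩
  have hhead : splice 0 1 a 0 = 0 := rfl
  have hhead_refl : reflection (splice 0 1 a) 0 ≠ 0 := one_ne_zero
  rw [mem_UTilde_iff hβ, mem_UTilde_iff hβ, hbinary,
    tailsAfterZeroLtOne_iff_shift_one (a := splice 0 1 a),
    tailsAfterZeroLtOne_iff_shift_one (a := reflection (splice 0 1 a)),
    shift_reflection, shift_splice]
  tauto

/-! ### The quasi-greedy expansion of `1` -/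

theorem _root_.QuasiGreedy.isBinary (hη : QuasiGreedy β η) : IsBinary η := hη.1

theorem _root_.QuasiGreedy.exists_ge_eq_one (hη : QuasiGreedy β η) (N : ℕ) :
    ∃ n ≥ N, η n = 1 := hη.2.1 N

theorem _root_.QuasiGreedy.betaVal_eq_one (hη : QuasiGreedy β η) : betaVal β η = 1 := hη.2.2.1

theorem _root_.QuasiGreedy.not_lexLt (hη : QuasiGreedy β η) (hb : IsBinary b)
    (hinf : ∀ N, ∃ n ≥ N, b n = 1) (hval : betaVal β b = 1) : ¬ LexLt η b := by
  intro hlt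
  have hne : b ≠ η := by
    rintro rfl
    exact hlt.asymm hlt
  exact hlt.asymm (hη.2.2.2 b hb hinf hval hne)

theorem _root_.QuasiGreedy.betaVal_shift_pos (hη : QuasiGreedy β η) (hβ : 1 < β) (n : ℕ) :
    0 < betaVal β (shift n η) :=
  (betaVal_shift_pos_iff hβ hη.isBinary).mpr (hη.exists_ge_eq_one n)

theorem _root_.QuasiGreedy.betaVal_shift_le_one_of_eq_zero (hη : QuasiGreedy β η)
    (hβ : β ∈ Ioo 1 2) (hn : η n = 0) : betaVal β (shift (n + 1) η) ≤ 1 := by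
  by_contra! hgt
  have hle := betaVal_le hβ.1 (hη.isBinary.shift (n + 1))
  obtain ⟨d, hd, hdval, hinf⟩ := exists_betaVal_eq_infinite hβ
    (y := betaVal β (shift (n + 1) η) - 1) ⟨by linarith, by linarith⟩
  obtain ⟨b, hb, hlt, hbval, rfl⟩ :=
    exists_lexLt_of_digit_eq_zero hβ.1 hη.isBinary hd hn hdval
  refine hη.not_lexLt hb (fun N => ?_) (hbval.trans hη.betaVal_eq_one) hlt
  obtain ⟨k, hk, hbk⟩ := hinf N
  exact ⟨n + 1 + k, by omega, hbk⟩

theorem _root_.QuasiGreedy.betaVal_shift_le_one (hη : QuasiGreedy β η) (hβ : β ∈ Ioo 1 2) (n : ℕ) :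
    betaVal β (shift n η) ≤ 1 := by
  induction n with
  | zero => rw [shift_zero, hη.betaVal_eq_one]
  | succ n ih =>
    rcases Nat.le_one_iff_eq_zero_or_eq_one.mp (hη.isBinary n) with hn | hn
    · exact hη.betaVal_shift_le_one_of_eq_zero hβ hn
    · have hstep := mul_betaVal_shift hβ.1 hη.isBinary n
      rw [hn, Nat.cast_one] at hstep
      have hmul : β * betaVal β (shift n η) ≤ β := mul_le_of_le_one_right (by linarith [hβ.1]) ih
      linarith [hβ.2]

theorem _root_.QuasiGreedy.lexLt_of_betaVal_lt_one (hη : QuasiGreedy β η) (hβ : β ∈ Ioo 1 2)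
    (ha : IsBinary a) (hlt : betaVal β a < 1) : LexLt a η := by
  have hne : a ≠ η := by
    rintro rfl
    exact hlt.ne hη.betaVal_eq_one
  refine (lexLt_or_lexLt_of_ne hne).resolve_right ?_
  rintro ⟨n, heq, hn⟩
  have := ha n
  refine (betaVal_le_of_shift_le hβ.1 hη.isBinary ha heq (by omega) (by omega) ?_).not_gt
    (hlt.trans_eq hη.betaVal_eq_one.symm)
  linarith [hη.betaVal_shift_le_one hβ (n + 1),
    betaVal_nonneg (by linarith [hβ.1] : 0 ≤ β) (shift (n + 1) a)]

/- If the tail behind the `0` at position `k` drops below `η` after `j` further digits, the tail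
behind the new `0` exceeds `1` by at least `β ^ (j + 1)` times as much as the old one. Such an
excess cannot grow forever. -/
theorem _root_.QuasiGreedy.tailsAfterZeroLtOne_of_lexLt (hη : QuasiGreedy β η) (hβ : 1 < β)
    (ha : IsBinary a) (h : ∀ k, a k = 0 → LexLt (shift (k + 1) a) η) :
    TailsAfterZeroLtOne β a := by
  have hnext (k : ℕ) (hk : a k = 0) : ∃ i j, a i = 0 ∧
      β ^ (j + 1) * (betaVal β (shift (k + 1) a) - 1) < betaVal β (shift (i + 1) a) - 1 := by
    obtain ⟨j, heq, hj⟩ := h k hk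
    have := hη.isBinary j
    have haj : shift (k + 1) a j = 0 := by omega
    have hdiff := pow_succ_mul_betaVal_sub hβ (ha.shift (k + 1)) hη.isBinary heq haj (by omega)
    rw [hη.betaVal_eq_one, shift_shift] at hdiff
    refine ⟨k + 1 + j, j, haj, ?_⟩
    rw [add_assoc (k + 1) j 1]
    linarith [hη.betaVal_shift_pos hβ (j + 1)]
  have hle : ∀ k : {k // a k = 0}, betaVal β (shift (k + 1) a) - 1 ≤ 0 := by
    refine nonpos_of_forall_exists_mul_le hβ ⟨1 / (β - 1) - 1, ?_⟩ fun k hk => ?_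
    · rintro _ ⟨k, rfl⟩
      exact sub_le_sub_right (betaVal_le hβ (ha.shift (k + 1))) 1
    · obtain ⟨i, j, hi, hlt⟩ := hnext k k.2
      have hpow : β ≤ β ^ (j + 1) := le_self_pow₀ hβ.le j.succ_ne_zero
      exact ⟨⟨i, hi⟩, (mul_le_mul_of_nonneg_right hpow hk.le).trans hlt.le⟩
  intro k hk
  obtain ⟨i, j, hi, hlt⟩ := hnext k hk
  have hneg := hlt.trans_le (hle ⟨i, hi⟩)
  exact sub_neg.mp ((pos_iff_neg_of_mul_neg hneg).mp (by positivity))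

/-! ### Subshifts of finite type -/

theorem occursAt_ofFn_iff {x y : ℕ → ℕ} :
    OccursAt (List.ofFn fun i : Fin m => x i) y n ↔ ∀ i < m, shift n y i = x i := by
  simp [OccursAt, shift, Fin.forall_iff]

theorem finite_ofFn_image_isBinary (m : ℕ) :
    ((fun x : ℕ → ℕ => List.ofFn fun i : Fin m => x i) '' {x | IsBinary x}).Finite := by
  refine (finite_range fun f : Fin m → Fin 2 => List.ofFn fun i => (f i : ℕ)).subset ?_
  rintro _ ⟨x, hx, rfl⟩
  exact ⟨fun i => ⟨x i, Nat.lt_succ_of_le (hx i)⟩, rfl⟩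

theorem isSFT01_of_dependsOn {P : (ℕ → ℕ) → Prop} (hP : DependsOn P (Iio m)) :
    IsSFT01 {x | IsBinary x ∧ ∀ n, P (shift n x)} := by
  refine ⟨(fun x : ℕ → ℕ => List.ofFn fun i : Fin m => x i) '' {x | IsBinary x ∧ ¬ P x},
    (finite_ofFn_image_isBinary m).subset (image_mono fun _ hx => hx.1), ?_⟩
  ext x
  refine and_congr_right fun hx => ⟨?_, fun h n => ?_⟩
  · rintro h _ ⟨y, ⟨-, hy⟩, rfl⟩ n hocc
    exact hy (hP (occursAt_ofFn_iff.mp hocc) ▸ h n)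
  · by_contra hn
    exact h _ ⟨shift n x, ⟨IsBinary.shift hx n, hn⟩, rfl⟩ n (occursAt_ofFn_iff.mpr fun _ _ => rfl)

theorem isClosed_setOf_isBinary : IsClosed {a | IsBinary a} := by
  simp only [IsBinary, ofPred_forall]
  exact isClosed_iInter fun n => (isClosed_discrete (Iic 1)).preimage (continuous_apply n)

theorem isCompact_setOf_isBinary : IsCompact {a | IsBinary a} := by
  have hpi := isCompact_univ_pi (X := fun _ : ℕ => ℕ) fun _ => (finite_Iic 1).isCompact
  refine hpi.of_isClosed_subset isClosed_setOf_isBinary fun a ha n _ => ha n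

theorem isOpen_setOf_occursAt (w : List ℕ) (n : ℕ) : IsOpen {x | OccursAt w x n} := by
  simp only [OccursAt, ofPred_forall]
  refine isOpen_iInter_of_finite fun i => ?_
  have hdigit : Continuous fun x : ℕ → ℕ => x (n + i.1) := continuous_apply _
  exact (isOpen_discrete {w.get i}).preimage hdigit

theorem _root_.IsSFT01.isClosed {Y : Set (ℕ → ℕ)} (hY : IsSFT01 Y) : IsClosed Y := by
  obtain ⟨F, -, rfl⟩ := hY
  have havoid : IsClosed {x | ∀ w ∈ F, ∀ n, ¬ OccursAt w x n} := by
    simp only [ofPred_forall]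
    exact isClosed_iInter fun w => isClosed_iInter fun _ => isClosed_iInter fun n =>
      (isOpen_setOf_occursAt w n).isClosed_compl
  exact isClosed_setOf_isBinary.inter havoid

/-! ### Orbits that meet the interval -/

/-- `a` is lexicographically smaller than `b`, and this is decided by the first `m` digits. -/
def LexLtBefore (m : ℕ) (a b : ℕ → ℕ) : Prop :=
  ∃ n < m, (∀ k < n, a k = b k) ∧ a n < b n

theorem LexLtBefore.lexLt (h : LexLtBefore m a b) : LexLt a b :=
  let ⟨n, _, hn⟩ := h
  ⟨n, hn⟩

theorem _root_.LexLt.lexLtBefore_or_eq (h : LexLt a b) (m : ℕ) :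
    LexLtBefore m a b ∨ ∀ k < m, a k = b k := by
  obtain ⟨n, heq, hn⟩ := h
  rcases lt_or_ge n m with hnm | hmn
  · exact .inl ⟨n, hnm, heq, hn⟩
  · exact .inr fun k hk => heq k (hk.trans_le hmn)

theorem LexLtBefore.congr_left {a' : ℕ → ℕ} (h : LexLtBefore m a b) (haa' : ∀ k < m, a k = a' k) :
    LexLtBefore m a' b := by
  obtain ⟨n, hnm, heq, hn⟩ := h
  exact ⟨n, hnm, fun k hk => haa' k (hk.trans hnm) ▸ heq k hk, haa' n hnm ▸ hn⟩

theorem dependsOn_lexLtBefore_after_zero (m : ℕ) (b : ℕ → ℕ) :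
    DependsOn (fun a => a 0 = 0 → LexLtBefore m (shift 1 a) b) (Iio (m + 1)) := by
  intro a a' h
  have hhead : a 0 = a' 0 := h 0 m.succ_pos
  have htail : ∀ k < m, shift 1 a k = shift 1 a' k := fun k hk => h (1 + k) (by rw [mem_Iio]; omega)
  simp only [hhead, eq_iff_iff]
  exact forall_congr' fun _ =>
    ⟨fun hlt => hlt.congr_left htail, fun hlt => hlt.congr_left fun k hk => (htail k hk).symm⟩

theorem _root_.QuasiGreedy.lexLtBefore_of_mem_UTilde (hη : QuasiGreedy β η) (hβ : β ∈ Ioo 1 2)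
    (hn : η n = 1) (hge : 1 ≤ betaVal β (shift (n + 1) (reflection η)))
    (ha : a ∈ UTilde β) {k : ℕ} (hk : a k = 0) :
    LexLtBefore (n + 1) (shift (k + 1) a) η := by
  obtain ⟨ha, htails, htails_refl⟩ := (mem_UTilde_iff hβ).mp ha
  have ha' : IsBinary (shift (k + 1) a) := ha.shift (k + 1)
  have hlt : betaVal β (shift (k + 1) a) < 1 := htails k hk
  refine ((hη.lexLt_of_betaVal_lt_one hβ ha' hlt).lexLtBefore_or_eq (n + 1)).resolve_right
    fun heq => ?_
  have htail_lt : betaVal β (shift (n + 1) (shift (k + 1) a)) < betaVal β (shift (n + 1) η) :=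
    (betaVal_shift_lt_iff hβ.1 ha' hη.isBinary heq).mpr (hlt.trans_eq hη.betaVal_eq_one.symm)
  have hone : a (k + 1 + n) = 1 := (heq n n.lt_succ_self).trans hn
  have hrefl_lt := htails_refl (k + 1 + n) ((reflection_eq_zero_iff ha).mpr hone)
  rw [shift_reflection, betaVal_reflection hβ.1 (ha.shift _)] at hrefl_lt
  rw [shift_reflection, betaVal_reflection hβ.1 (hη.isBinary.shift _)] at hge
  rw [shift_shift, ← add_assoc] at htail_lt
  linarith

theorem _root_.QuasiGreedy.isSFT01_UTilde (hη : QuasiGreedy β η) (hβ : β ∈ Ioo 1 2)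
    (h : ¬ TailsAfterZeroLtOne β (reflection η)) : IsSFT01 (UTilde β) := by
  unfold TailsAfterZeroLtOne at h
  push Not at h
  obtain ⟨n, hn, hge⟩ := h
  rw [reflection_eq_zero_iff hη.isBinary] at hn
  let P (x : ℕ → ℕ) : Prop := x 0 = 0 → LexLtBefore (n + 1) (shift 1 x) η
  have hP : DependsOn P (Iio (n + 2)) := dependsOn_lexLtBefore_after_zero (n + 1) η
  have hP_refl : DependsOn (fun x => P x ∧ P (reflection x)) (Iio (n + 2)) := fun x y hxy =>
    congrArg₂ And (hP hxy) (hP fun i hi => congrArg (1 - ·) (hxy i hi))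
  have hP_of_mem {a : ℕ → ℕ} (ha : a ∈ UTilde β) (k : ℕ) : P (shift k a) := fun hk => by
    rw [shift_shift]
    exact hη.lexLtBefore_of_mem_UTilde hβ hn hge ha hk
  have htails_of_P {a : ℕ → ℕ} (ha : IsBinary a) (hPa : ∀ k, P (shift k a)) :
      TailsAfterZeroLtOne β a :=
    hη.tailsAfterZeroLtOne_of_lexLt hβ.1 ha fun k hk => shift_shift 1 k a ▸ (hPa k hk).lexLt
  convert isSFT01_of_dependsOn hP_refl
  ext a
  exact ⟨fun ha => ⟨ha.1, fun k =>
      ⟨hP_of_mem ha k, hP_of_mem (reflection_mem_UTilde hβ.1 ha) k⟩⟩,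
    fun ⟨ha, h⟩ => (mem_UTilde_iff hβ).mpr ⟨ha, htails_of_P ha fun k => (h k).1,
      htails_of_P (isBinary_reflection a) fun k => (h k).2⟩⟩

/-! ### Orbits that miss the interval -/

/-- The sequence `w w̄ w w̄ ⋯`, where `w` consists of the first `m` digits of `a` and `w̄` is its
reflection. -/
def alternatingPeriodic (a : ℕ → ℕ) (m : ℕ) : ℕ → ℕ :=
  fun i => if Even (i / m) then a (i % m) else reflection a (i % m)

theorem isBinary_alternatingPeriodic (ha : IsBinary a) (m : ℕ) :
    IsBinary (alternatingPeriodic a m) := by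
  intro i
  unfold alternatingPeriodic
  split_ifs
  exacts [ha _, isBinary_reflection a _]

theorem alternatingPeriodic_of_lt (a : ℕ → ℕ) {i : ℕ} (hi : i < m) :
    alternatingPeriodic a m i = a i := by
  simp [alternatingPeriodic, Nat.div_eq_of_lt hi, Nat.mod_eq_of_lt hi]

theorem shift_alternatingPeriodic (ha : IsBinary a) (hm : 0 < m) :
    shift m (alternatingPeriodic a m) = reflection (alternatingPeriodic a m) := by
  funext i
  have hrefl := congrFun (reflection_reflection ha) (i % m)
  simp only [reflection] at hrefl
  simp only [shift, alternatingPeriodic, reflection, Nat.add_mod_left, Nat.add_div_left _ hm,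
    Nat.even_add_one]
  split_ifs <;> simp_all

theorem tailsAfterZeroLtOne_of_shift_eq_reflection (ha : IsBinary a) (hm : 0 < m)
    (hshift : shift m a = reflection a)
    (h : ∀ n < m, a n = 0 → betaVal β (shift (n + 1) a) < 1)
    (h_refl : ∀ n < m, reflection a n = 0 → betaVal β (shift (n + 1) (reflection a)) < 1) :
    TailsAfterZeroLtOne β a ∧ TailsAfterZeroLtOne β (reflection a) := by
  have hshift_refl : shift m (reflection a) = a := by
    rw [shift_reflection, hshift, reflection_reflection ha]
  refine forall_and.mp fun n => ?_
  induction n using Nat.strong_induction_on with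
  | _ n ih =>
    rcases lt_or_ge n m with hn | hn
    · exact ⟨h n hn, h_refl n hn⟩
    · obtain ⟨k, rfl⟩ := Nat.exists_eq_add_of_le hn
      obtain ⟨ihk, ihk_refl⟩ := ih k (by omega)
      rw [add_assoc, ← shift_shift (k + 1) m a, ← shift_shift (k + 1) m, hshift, hshift_refl]
      exact ⟨fun hk => ihk_refl (congrFun hshift k ▸ hk),
        fun hk => ihk (congrFun hshift_refl k ▸ hk)⟩

theorem _root_.QuasiGreedy.betaVal_alternatingPeriodic_lt_one (hη : QuasiGreedy β η)
    (hβ : 1 < β) (hlt : betaVal β (shift (n + 1) (reflection η)) < 1) :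
    betaVal β (alternatingPeriodic η (n + 1)) < 1 := by
  have hz := isBinary_alternatingPeriodic hη.isBinary (n + 1)
  have hdiff := pow_mul_betaVal_sub hβ hz hη.isBinary
    fun k hk => alternatingPeriodic_of_lt η hk
  rw [shift_alternatingPeriodic hη.isBinary n.succ_pos, betaVal_reflection hβ hz,
    hη.betaVal_eq_one] at hdiff
  rw [shift_reflection, betaVal_reflection hβ (hη.isBinary.shift _)] at hlt
  have hpos : 0 < (β ^ (n + 1) + 1) * (1 - betaVal β (alternatingPeriodic η (n + 1))) := by
    linarith
  exact sub_pos.mp ((mul_pos_iff_of_pos_left (by positivity)).mp hpos)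

theorem _root_.QuasiGreedy.alternatingPeriodic_mem_UTilde (hη : QuasiGreedy β η)
    (hβ : β ∈ Ioo 1 2) (ha : a ∈ UTilde β) (heq : ∀ k < n, a k = η k)
    (hlt : betaVal β a < betaVal β (alternatingPeriodic η (n + 1)))
    (hlt_one : betaVal β (alternatingPeriodic η (n + 1)) < 1) :
    alternatingPeriodic η (n + 1) ∈ UTilde β := by
  obtain ⟨ha, -, htails_refl⟩ := (mem_UTilde_iff hβ).mp ha
  set z := alternatingPeriodic η (n + 1)
  have hz : IsBinary z := isBinary_alternatingPeriodic hη.isBinary (n + 1)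
  have hzη : ∀ k < n + 1, z k = η k := fun k hk => alternatingPeriodic_of_lt η hk
  have hza : ∀ k < n, a k = z k := fun k hk => (heq k hk).trans (hzη k (by omega)).symm
  have hshift : shift (n + 1) z = reflection z :=
    shift_alternatingPeriodic hη.isBinary n.succ_pos
  refine (mem_UTilde_iff hβ).mpr ⟨hz, tailsAfterZeroLtOne_of_shift_eq_reflection hz n.succ_pos
    hshift (fun k hk _ => ?_) fun k hk hzk => ?_⟩
  · refine lt_of_lt_of_le ?_ (hη.betaVal_shift_le_one hβ (k + 1))
    exact (betaVal_shift_lt_iff hβ.1 hz hη.isBinary fun i hi => hzη i (by omega)).mpr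
      (hlt_one.trans_eq hη.betaVal_eq_one.symm)
  · rcases (Nat.lt_succ_iff.mp hk).lt_or_eq with hkn | rfl
    · have htail := (betaVal_shift_lt_iff (n := k + 1) hβ.1 ha hz
        fun i hi => hza i (by omega)).mpr hlt
      have hone : a k = 1 := (hza k hkn).trans ((reflection_eq_zero_iff hz).mp hzk)
      have htail_a := htails_refl k ((reflection_eq_zero_iff ha).mpr hone)
      rw [shift_reflection, betaVal_reflection hβ.1 (ha.shift _)] at htail_a
      rw [shift_reflection, betaVal_reflection hβ.1 (hz.shift _)]
      linarith
    · rwa [shift_reflection, hshift, reflection_reflection hz]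

theorem _root_.QuasiGreedy.exists_mem_UTilde_betaVal_gt (hη : QuasiGreedy β η) (hβ : β ∈ Ioo 1 2)
    (hηr : TailsAfterZeroLtOne β (reflection η)) (ha : a ∈ UTilde β) (hlt : betaVal β a < 1) :
    ∃ z ∈ UTilde β, betaVal β a < betaVal β z ∧ betaVal β z < 1 := by
  have ha_bin : IsBinary a := ha.1
  obtain ⟨j, heq, hj⟩ := hη.lexLt_of_betaVal_lt_one hβ ha_bin hlt
  have := hη.isBinary j
  have haj : a j = 0 := by omega
  have hηj : η j = 1 := by omega
  have hz_lt := hη.betaVal_alternatingPeriodic_lt_one hβ.1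
    (hηr j ((reflection_eq_zero_iff hη.isBinary).mpr hηj))
  have hz := isBinary_alternatingPeriodic hη.isBinary (j + 1)
  have hlt_z : betaVal β a < betaVal β (alternatingPeriodic η (j + 1)) := by
    refine betaVal_lt_of_shift_lt hβ.1 ha_bin hz
      (fun k hk => (heq k hk).trans (alternatingPeriodic_of_lt η (by omega)).symm) haj
      ((alternatingPeriodic_of_lt η j.lt_succ_self).trans hηj) ?_
    have htail := tailsAfterZeroLtOne_of_mem_UTilde hβ ha j haj
    rw [shift_alternatingPeriodic hη.isBinary j.succ_pos]
    linarith [betaVal_nonneg (by linarith [hβ.1] : 0 ≤ β)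
      (reflection (alternatingPeriodic η (j + 1)))]
  exact ⟨_, hη.alternatingPeriodic_mem_UTilde hβ ha heq hlt_z hz_lt, hlt_z, hz_lt⟩

theorem continuousOn_betaVal (hβ : 1 < β) : ContinuousOn (betaVal β) {a | IsBinary a} := by
  refine continuousOn_tsum (u := fun n => 1 / β ^ (n + 1)) (fun n => ?_)
    (hasSum_one_div_pow_succ hβ).summable fun n a ha => ?_
  · have hdigit : Continuous fun a : ℕ → ℕ => (a n : ℝ) :=
      continuous_of_discreteTopology.comp (continuous_apply n)
    exact (hdigit.div_const _).continuousOn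
  · rw [Real.norm_of_nonneg (by positivity)]
    exact digit_div_le (by linarith) ha n

theorem continuous_splice (a : ℕ → ℕ) (n : ℕ) : Continuous (splice a n) := by
  refine continuous_pi fun k => ?_
  unfold splice
  split_ifs
  exacts [continuous_const, continuous_apply _]

theorem _root_.QuasiGreedy.not_isClosed_UTilde (hη : QuasiGreedy β η) (hβ : β ∈ Ioo 1 2)
    (hηr : TailsAfterZeroLtOne β (reflection η)) : ¬ IsClosed (UTilde β) := by
  intro hclosed
  let K : Set (ℕ → ℕ) := {a | IsBinary a} ∩ splice 0 1 ⁻¹' UTilde β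
  have hK : IsCompact K :=
    isCompact_setOf_isBinary.inter_right (hclosed.preimage (continuous_splice 0 1))
  have hzero : (0 : ℕ → ℕ) ∈ UTilde β := by
    refine (mem_UTilde_iff hβ).mpr ⟨fun _ => zero_le_one, fun n _ => ?_, fun n hn => ?_⟩
    · exact (betaVal_zero β).trans_lt one_pos
    · exact absurd hn one_ne_zero
  have hK_nonempty : K.Nonempty := ⟨0, fun _ => zero_le_one,
    (splice_zero_mem_UTilde_iff hβ).mpr ⟨hzero, (betaVal_zero β).trans_lt one_pos⟩⟩
  obtain ⟨a, ⟨-, haK⟩, hmax⟩ :=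
    hK.exists_isMaxOn hK_nonempty ((continuousOn_betaVal hβ.1).mono inter_subset_left)
  obtain ⟨ha, ha_lt⟩ := (splice_zero_mem_UTilde_iff hβ).mp haK
  obtain ⟨z, hz, haz, hz_lt⟩ := hη.exists_mem_UTilde_betaVal_gt hβ hηr ha ha_lt
  exact (hmax ⟨hz.1, (splice_zero_mem_UTilde_iff hβ).mpr ⟨hz, hz_lt⟩⟩).not_gt haz

theorem _root_.QuasiGreedy.isSFT01_UTilde_iff (hη : QuasiGreedy β η) (hβ : β ∈ Ioo 1 2) :
    IsSFT01 (UTilde β) ↔ ¬ TailsAfterZeroLtOne β (reflection η) :=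
  ⟨fun h hηr => hη.not_isClosed_UTilde hβ hηr h.isClosed, hη.isSFT01_UTilde hβ⟩

/-! ### The orbit condition -/

theorem _root_.QuasiGreedy.one_div_lt_betaVal_shift_iff (hη : QuasiGreedy β η) (hβ : β ∈ Ioo 1 2) :
    1 / β < betaVal β (shift n η) ↔ η n = 1 := by
  rw [div_lt_iff₀' (by linarith [hβ.1]), mul_betaVal_shift hβ.1 hη.isBinary]
  rcases Nat.le_one_iff_eq_zero_or_eq_one.mp (hη.isBinary n) with hn | hn
  · simp [hn, hη.betaVal_shift_le_one hβ (n + 1)]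
  · simp [hn, hη.betaVal_shift_pos hβ.1 (n + 1)]

theorem _root_.QuasiGreedy.betaVal_shift_mem_Ioc_iff (hη : QuasiGreedy β η) (hβ : β ∈ Ioo 1 2) :
    betaVal β (shift n η) ∈ Ioc (1 / β) (1 / (β * (β - 1))) ↔
      reflection η n = 0 ∧ 1 ≤ betaVal β (shift (n + 1) (reflection η)) := by
  rw [mem_Ioc, hη.one_div_lt_betaVal_shift_iff hβ, reflection_eq_zero_iff hη.isBinary,
    shift_reflection, betaVal_reflection hβ.1 (hη.isBinary.shift _)]
  refine and_congr_right fun hn => ?_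
  rw [mul_comm, ← div_div, le_div_iff₀' (by linarith [hβ.1]),
    mul_betaVal_shift hβ.1 hη.isBinary, hn, Nat.cast_one, le_sub_iff_add_le]

theorem _root_.QuasiGreedy.exists_pos_betaVal_shift_mem_Ioc (hη : QuasiGreedy β η)
    (hβ : β ∈ Ioo 1 2) {c : ℝ} (h : betaVal β (shift n η) ∈ Ioc (1 / β) c) :
    ∃ k ≥ 1, betaVal β (shift k η) ∈ Ioc (1 / β) c := by
  rcases n.eq_zero_or_pos with rfl | hn
  · rw [shift_zero, hη.betaVal_eq_one] at h
    obtain ⟨k, hk, hηk⟩ := hη.exists_ge_eq_one 1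
    exact ⟨k, hk, (hη.one_div_lt_betaVal_shift_iff hβ).mpr hηk,
      (hη.betaVal_shift_le_one hβ k).trans h.2⟩
  · exact ⟨n, hn, h⟩

theorem _root_.QuasiGreedy.not_tailsAfterZeroLtOne_iff (hη : QuasiGreedy β η) (hβ : β ∈ Ioo 1 2) :
    ¬ TailsAfterZeroLtOne β (reflection η) ↔
      ∃ n ≥ 1, betaVal β (shift n η) ∈ Ioc (1 / β) (1 / (β * (β - 1))) := by
  unfold TailsAfterZeroLtOne
  push Not
  simp only [← hη.betaVal_shift_mem_Ioc_iff hβ]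
  exact ⟨fun ⟨_, hn⟩ => hη.exists_pos_betaVal_shift_mem_Ioc hβ hn, fun ⟨n, _, hn⟩ => ⟨n, hn⟩⟩

end BetaExpansion

/-- `Ũ_β` is a subshift of finite type iff the quasi-greedy orbit of `1`
falls into `(1/β, 1/(β(β-1))]`. -/
theorem statement4 (β : ℝ) (hβ : β ∈ Set.Ioo (1 : ℝ) 2)
    (η : ℕ → ℕ) (hη : QuasiGreedy β η)
    (Q : ℕ → ℝ) (hQ : ∀ n, Q n = betaVal β (fun k => η (n + k))) :
    IsSFT01 (UTilde β) ↔
      ∃ n ≥ 1, Q n ∈ Set.Ioc (1 / β) (1 / (β * (β - 1))) := by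
  simp only [hQ]
  exact (hη.isSFT01_UTilde_iff hβ).trans (hη.not_tailsAfterZeroLtOne_iff hβ)
end

section
/- The set of unique expansions Ũ_β is a subshift of finite type if and only if Ũ_β is a sofic shift. -/
/-- The left shift on sequences. -/
def shiftSeq (x : ℕ → ℕ) : ℕ → ℕ := fun n => x (n + 1)

/-- `X` is a subshift of finite type over the finite alphabet `{0, …, N-1}`. -/
def IsSFTAlph (N : ℕ) (X : Set (ℕ → ℕ)) : Prop :=
  ∃ F : Set (List ℕ), F.Finite ∧
    X = {x | (∀ n, x n < N) ∧ ∀ w ∈ F, ∀ n, ¬ OccursAt w x n}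

/-- `Y ⊆ {0,1}^ℕ` is a sofic shift: it is the image of a subshift of finite type over a
finite alphabet under a continuous shift-commuting surjection. -/
def IsSofic01 (Y : Set (ℕ → ℕ)) : Prop :=
  ∃ (N : ℕ) (X : Set (ℕ → ℕ)) (φ : (ℕ → ℕ) → ℕ → ℕ),
    IsSFTAlph N X ∧ ContinuousOn φ X ∧ φ '' X = Y ∧
    ∀ x ∈ X, φ (shiftSeq x) = shiftSeq (φ x)

/-!
Call a 0-1 sequence ambiguous at its head if some 0-1 sequence with the other first digit has the
same value. Cancelling common prefixes, `a ∈ Ũ_β` if and only if no shift of `a` is ambiguous at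
its head, and by compactness of `{0,1}^ℕ` and continuity of the value these ambiguous sequences
form a closed set `K`. If `Ũ_β` is sofic, it is a continuous image of a compact set, hence compact,
and it is disjoint from `K`; so for some `m` no element of `Ũ_β` shares its first `m` digits with
an element of `K`. The prefixes of length `m` of elements of `K` then are a finite set of forbidden
words defining `Ũ_β`.
-/

open Set PiNat

section Shift

variable {N : ℕ} {x y : ℕ → ℕ}

/-- The full shift `{0, …, N-1}^ℕ`. -/
def fullShift (N : ℕ) : Set (ℕ → ℕ) := {x | ∀ n, x n < N}

lemma isCompact_fullShift (N : ℕ) : IsCompact (fullShift N) := by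
  simpa only [fullShift, pi, mem_univ, true_imp_iff, mem_Iio] using
    isCompact_univ_pi fun _ : ℕ => (finite_Iio N).isCompact

lemma mem_fullShift_iff_head_tail : x ∈ fullShift N ↔ x 0 < N ∧ shiftSeq x ∈ fullShift N :=
  Nat.and_forall_add_one.symm

lemma mapsTo_shiftSeq_fullShift : MapsTo shiftSeq (fullShift N) (fullShift N) :=
  fun _ hx n => hx (n + 1)

lemma exists_head_eq_and_shiftSeq_eq (d : ℕ) (x : ℕ → ℕ) : ∃ y, y 0 = d ∧ shiftSeq y = x :=
  ⟨fun | 0 => d | n + 1 => x n, rfl, rfl⟩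

lemma shiftSeq_iterate_apply (n : ℕ) (x : ℕ → ℕ) (i : ℕ) : shiftSeq^[n] x i = x (n + i) := by
  induction n generalizing x with
  | zero => simp
  | succ n ih => rw [Function.iterate_succ_apply, ih, shiftSeq]; congr 1; omega

lemma occursAt_ofFn_iff {m n : ℕ} :
    OccursAt (List.ofFn fun i : Fin m => y i) x n ↔ shiftSeq^[n] x ∈ cylinder y m := by
  simp only [OccursAt, mem_cylinder_iff, shiftSeq_iterate_apply, Fin.forall_iff, List.length_ofFn,
    List.get_ofFn, Fin.val_cast]

lemma isClopen_setOf_occursAt (w : List ℕ) (n : ℕ) : IsClopen {x | OccursAt w x n} := by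
  simp only [OccursAt, ofPred_forall]
  exact isClopen_iInter_of_finite fun i =>
    (isClopen_discrete {w.get i}).preimage (continuous_apply (n + i.1))

end Shift

section FiniteType

variable {N : ℕ} {X Y K : Set (ℕ → ℕ)}

lemma isSFT01_iff_isSFTAlph_two : IsSFT01 Y ↔ IsSFTAlph 2 Y := by
  simp only [IsSFT01, IsSFTAlph, Nat.lt_succ_iff]

lemma IsSFTAlph.isCompact (hX : IsSFTAlph N X) : IsCompact X := by
  obtain ⟨F, -, rfl⟩ := hX
  have isClosed_avoiding : IsClosed {x | ∀ w ∈ F, ∀ n, ¬ OccursAt w x n} := by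
    simp only [ofPred_forall]
    exact isClosed_biInter fun w _ => isClosed_iInter fun n =>
      (isClopen_setOf_occursAt w n).compl.isClosed
  exact (isCompact_fullShift N).inter_right isClosed_avoiding

lemma IsSofic01.isCompact (hY : IsSofic01 Y) : IsCompact Y := by
  obtain ⟨N, X, φ, hX, hφ, rfl, -⟩ := hY
  exact hX.isCompact.image_of_continuousOn hφ

lemma IsSFT01.isSofic01 (hY : IsSFT01 Y) : IsSofic01 Y :=
  ⟨2, Y, id, isSFT01_iff_isSFTAlph_two.mp hY, continuousOn_id, image_id Y, fun _ _ => rfl⟩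

lemma exists_forall_disjoint_cylinder {E : ℕ → Type*} [∀ n, TopologicalSpace (E n)]
    [∀ n, DiscreteTopology (E n)] {s t : Set (∀ n, E n)} (hs : IsCompact s) (ht : IsClosed t)
    (hst : Disjoint s t) : ∃ m, ∀ x ∈ s, Disjoint t (cylinder x m) := by
  let separated (m : ℕ) : Set (∀ n, E n) := {x | Disjoint t (cylinder x m)}
  have separated_mono : Monotone separated := fun m n hmn x hx =>
    hx.mono_right (cylinder_anti x hmn)
  have isOpen_separated (m : ℕ) : IsOpen (separated m) := by
    refine isOpen_iff_mem_nhds.mpr fun x hx => ?_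
    filter_upwards [(isOpen_cylinder E x m).mem_nhds (self_mem_cylinder x m)] with y hy
    rwa [mem_ofPred_eq, mem_cylinder_iff_eq.mp hy]
  have subset_iUnion_separated : s ⊆ ⋃ m, separated m := fun x hx =>
    mem_iUnion.mpr (exists_disjoint_cylinder ht (disjoint_left.mp hst hx))
  exact hs.elim_directed_cover separated isOpen_separated subset_iUnion_separated
    separated_mono.directed_le

/-- The one-sided subshift of sequences over `{0, …, N-1}` whose orbit under the shift never
enters `K`. -/
def avoidingShift (N : ℕ) (K : Set (ℕ → ℕ)) : Set (ℕ → ℕ) :=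
  {x ∈ fullShift N | ∀ n, shiftSeq^[n] x ∉ K}

lemma mapsTo_shiftSeq_avoidingShift :
    MapsTo shiftSeq (avoidingShift N K) (avoidingShift N K) :=
  fun _ hx => ⟨mapsTo_shiftSeq_fullShift hx.1, fun n => hx.2 (n + 1)⟩

lemma disjoint_avoidingShift : Disjoint (avoidingShift N K) K :=
  disjoint_left.mpr fun _ hx => hx.2 0

lemma finite_image_ofFn_of_subset_fullShift (hK : K ⊆ fullShift N) (m : ℕ) :
    ((fun y : ℕ → ℕ => List.ofFn fun i : Fin m => y i) '' K).Finite := by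
  refine ((Finite.pi' fun _ : Fin m => finite_Iio N).image List.ofFn).subset ?_
  rintro _ ⟨y, hy, rfl⟩
  exact mem_image_of_mem _ fun i => hK hy i

theorem isSFTAlph_avoidingShift (hK : IsClosed K) (hKN : K ⊆ fullShift N)
    (hcompact : IsCompact (avoidingShift N K)) : IsSFTAlph N (avoidingShift N K) := by
  obtain ⟨m, hm⟩ := exists_forall_disjoint_cylinder hcompact hK disjoint_avoidingShift
  refine ⟨_, finite_image_ofFn_of_subset_fullShift hKN m, Subset.antisymm ?_ ?_⟩
  · refine fun x hx => ⟨hx.1, forall_mem_image.mpr fun y hy n hocc => ?_⟩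
    exact disjoint_left.mp (hm _ (mapsTo_shiftSeq_avoidingShift.iterate n hx)) hy
      ((mem_cylinder_comm _ _ _).mp (occursAt_ofFn_iff.mp hocc))
  · refine fun x hx => ⟨hx.1, fun n hn => ?_⟩
    exact hx.2 _ (mem_image_of_mem _ hn) n (occursAt_ofFn_iff.mpr (self_mem_cylinder _ m))

end FiniteType

section BetaVal

variable {β : ℝ} {N : ℕ} {a b : ℕ → ℕ}

lemma norm_digit_div_pow_le (β : ℝ) (ha : a ∈ fullShift N) (n : ℕ) :
    ‖(a n : ℝ) / β ^ (n + 1)‖ ≤ N * |β|⁻¹ ^ (n + 1) := by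
  have digit_le : (a n : ℝ) ≤ N := by exact_mod_cast (ha n).le
  rw [norm_div, norm_pow, Real.norm_natCast, Real.norm_eq_abs, inv_pow, div_eq_mul_inv]
  gcongr

lemma summable_mul_inv_abs_pow_succ (hβ : 1 < |β|) (c : ℝ) :
    Summable fun n : ℕ => c * |β|⁻¹ ^ (n + 1) :=
  ((summable_nat_add_iff 1).mpr
    (summable_geometric_of_lt_one (by positivity) (inv_lt_one_of_one_lt₀ hβ))).mul_left c

lemma continuousOn_betaVal (hβ : 1 < |β|) (N : ℕ) : ContinuousOn (betaVal β) (fullShift N) := by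
  refine continuousOn_tsum (fun n => Continuous.continuousOn ?_)
    (summable_mul_inv_abs_pow_succ hβ N) fun n a ha => norm_digit_div_pow_le β ha n
  exact (continuous_of_discreteTopology.comp (continuous_apply n)).div_const _

lemma betaVal_eq_head_add_betaVal_shiftSeq_div (hβ : 1 < |β|) (ha : a ∈ fullShift N) :
    betaVal β a = (a 0 + betaVal β (shiftSeq a)) / β := by
  have summable_digits : Summable fun n : ℕ => (a n : ℝ) / β ^ (n + 1) :=
    .of_norm_bounded (summable_mul_inv_abs_pow_succ hβ N) (norm_digit_div_pow_le β ha)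
  rw [betaVal, summable_digits.tsum_eq_zero_add, zero_add, pow_one, add_div, betaVal,
    ← tsum_div_const]
  simp only [shiftSeq, div_div, pow_succ]

lemma betaVal_eq_iff_betaVal_shiftSeq_eq (hβ : 1 < |β|) (ha : a ∈ fullShift N)
    (hb : b ∈ fullShift N) (h0 : b 0 = a 0) :
    betaVal β b = betaVal β a ↔ betaVal β (shiftSeq b) = betaVal β (shiftSeq a) := by
  have hβ0 : β ≠ 0 := abs_pos.mp (one_pos.trans hβ)
  rw [betaVal_eq_head_add_betaVal_shiftSeq_div hβ ha,
    betaVal_eq_head_add_betaVal_shiftSeq_div hβ hb, h0, div_left_inj' hβ0, add_right_inj]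

end BetaVal

section UniqueExpansions

variable {β : ℝ} {N : ℕ} {a : ℕ → ℕ}

/-- The sequences over `{0, …, N-1}` whose value in base `β` is also the value of a sequence over
`{0, …, N-1}` with a different first digit. -/
def headAmbiguous (β : ℝ) (N : ℕ) : Set (ℕ → ℕ) :=
  {a ∈ fullShift N | ∃ b ∈ fullShift N, betaVal β b = betaVal β a ∧ b 0 ≠ a 0}

lemma headAmbiguous_subset_fullShift : headAmbiguous β N ⊆ fullShift N := sep_subset _ _

lemma isClosed_headAmbiguous (hβ : 1 < |β|) (N : ℕ) : IsClosed (headAmbiguous β N) := by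
  let D : Set ((ℕ → ℕ) × (ℕ → ℕ)) := fullShift N ×ˢ fullShift N
  have isCompact_D : IsCompact D := (isCompact_fullShift N).prod (isCompact_fullShift N)
  have hfst : ContinuousOn (fun p : (ℕ → ℕ) × (ℕ → ℕ) => betaVal β p.1) D :=
    (continuousOn_betaVal hβ N).comp continuousOn_fst fun _ hp => hp.1
  have hsnd : ContinuousOn (fun p : (ℕ → ℕ) × (ℕ → ℕ) => betaVal β p.2) D :=
    (continuousOn_betaVal hβ N).comp continuousOn_snd fun _ hp => hp.2
  have isClosed_sameValue : IsClosed {p ∈ D | betaVal β p.2 = betaVal β p.1} :=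
    (hsnd.prodMk hfst).preimage_isClosed_of_isClosed isCompact_D.isClosed isClosed_diagonal
  have isClosed_headsNe : IsClosed {p : (ℕ → ℕ) × (ℕ → ℕ) | p.2 0 ≠ p.1 0} :=
    (isClosed_discrete {q : ℕ × ℕ | q.2 ≠ q.1}).preimage
      (f := fun p : (ℕ → ℕ) × (ℕ → ℕ) => (p.1 0, p.2 0)) (by fun_prop)
  have eq_image : headAmbiguous β N =
      Prod.fst '' ({p ∈ D | betaVal β p.2 = betaVal β p.1} ∩ {p | p.2 0 ≠ p.1 0}) := by
    ext a
    simp [headAmbiguous, D, and_assoc]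
  rw [eq_image]
  exact ((isCompact_D.of_isClosed_subset isClosed_sameValue (sep_subset _ _)).inter_right
    isClosed_headsNe).image continuous_fst |>.isClosed

lemma mem_uTilde_iff : a ∈ UTilde β ↔
    a ∈ fullShift 2 ∧ ∀ b ∈ fullShift 2, betaVal β b = betaVal β a → b = a := by
  simp only [UTilde, fullShift, mem_ofPred_eq, Nat.lt_succ_iff]

lemma mapsTo_shiftSeq_uTilde (hβ : 1 < |β|) : MapsTo shiftSeq (UTilde β) (UTilde β) := by
  intro a ha
  obtain ⟨haD, ha_unique⟩ := mem_uTilde_iff.mp ha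
  refine mem_uTilde_iff.mpr ⟨mapsTo_shiftSeq_fullShift haD, fun b hb hval => ?_⟩
  obtain ⟨c, hc0, rfl⟩ := exists_head_eq_and_shiftSeq_eq (a 0) b
  have hc : c ∈ fullShift 2 := mem_fullShift_iff_head_tail.mpr ⟨hc0 ▸ haD 0, hb⟩
  rw [ha_unique c hc ((betaVal_eq_iff_betaVal_shiftSeq_eq hβ haD hc hc0).mpr hval)]

lemma disjoint_uTilde_headAmbiguous : Disjoint (UTilde β) (headAmbiguous β 2) :=
  disjoint_left.mpr fun _ ha ⟨_, _, hb, hval, hne⟩ =>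
    hne (congrFun ((mem_uTilde_iff.mp ha).2 _ hb hval) 0)

lemma eq_of_mem_avoidingShift_of_betaVal_eq {b : ℕ → ℕ} (hβ : 1 < |β|)
    (ha : a ∈ avoidingShift N (headAmbiguous β N)) (hb : b ∈ fullShift N)
    (hval : betaVal β b = betaVal β a) : b = a := by
  have iterate_mem {x : ℕ → ℕ} (hx : x ∈ fullShift N) (n : ℕ) : shiftSeq^[n] x ∈ fullShift N :=
    mapsTo_shiftSeq_fullShift.iterate n hx
  have head_eq (n : ℕ) (h : betaVal β (shiftSeq^[n] b) = betaVal β (shiftSeq^[n] a)) :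
      shiftSeq^[n] b 0 = shiftSeq^[n] a 0 :=
    by_contra fun hne => ha.2 n ⟨iterate_mem ha.1 n, _, iterate_mem hb n, h, hne⟩
  have iterate_val (n : ℕ) : betaVal β (shiftSeq^[n] b) = betaVal β (shiftSeq^[n] a) := by
    induction n with
    | zero => exact hval
    | succ n ih =>
      rw [Function.iterate_succ_apply', Function.iterate_succ_apply']
      exact (betaVal_eq_iff_betaVal_shiftSeq_eq hβ (iterate_mem ha.1 n) (iterate_mem hb n)
        (head_eq n ih)).mp ih
  ext n
  simpa only [shiftSeq_iterate_apply, add_zero] using head_eq n (iterate_val n)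

theorem uTilde_eq_avoidingShift (hβ : 1 < |β|) :
    UTilde β = avoidingShift 2 (headAmbiguous β 2) := by
  refine Subset.antisymm (fun a ha => ⟨(mem_uTilde_iff.mp ha).1, fun n => ?_⟩) fun a ha => ?_
  · exact disjoint_left.mp disjoint_uTilde_headAmbiguous
      ((mapsTo_shiftSeq_uTilde hβ).iterate n ha)
  · exact mem_uTilde_iff.mpr
      ⟨ha.1, fun _ hb hval => eq_of_mem_avoidingShift_of_betaVal_eq hβ ha hb hval⟩

theorem isSFT01_uTilde_of_isCompact (hβ : 1 < |β|) (hU : IsCompact (UTilde β)) :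
    IsSFT01 (UTilde β) := by
  rw [uTilde_eq_avoidingShift hβ] at hU ⊢
  exact isSFT01_iff_isSFTAlph_two.mpr <|
    isSFTAlph_avoidingShift (isClosed_headAmbiguous hβ 2) headAmbiguous_subset_fullShift hU

end UniqueExpansions

theorem statement5_general (β : ℝ) (hβ : 1 < |β|) :
    IsSFT01 (UTilde β) ↔ IsSofic01 (UTilde β) :=
  ⟨IsSFT01.isSofic01, fun hsofic => isSFT01_uTilde_of_isCompact hβ hsofic.isCompact⟩

/-- `Ũ_β` is a subshift of finite type iff it is a sofic shift. -/
theorem statement5 (β : ℝ) (hβ : β ∈ Set.Ioo (1 : ℝ) 2) :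
    IsSFT01 (UTilde β) ↔ IsSofic01 (UTilde β) :=
  statement5_general β (hβ.1.trans_le (le_abs_self β))
end
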